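/- arXiv:1202.2560 — 2 statements merged into one kernel-verified Lean document; each statement's English description precedes it below -/
import Mathlib

section
/- For every reflexive binary relation R on ℕ, there exists a family of subsets Z_i of ℕ such that for all i, j: Z_i generically computes Z_j if and only if R(i,j). Hence every countable reflexive binary relation embeds into the relation of relative generic computation on subsets of ℕ. -/
open Filter

/-- The counting function: number of elements of `A` below `n`, divided by `n`. -/
noncomputable def partialDensity (A : Set ℕ) (n : ℕ) : ℝ := ((A ∩ Set.Iio n).ncard : ℝ) / n

/-- `A ⊆ ℕ` has density `d` if the partial densities tend to `d`. -/
def HasDensity (A : Set ℕ) (d : ℝ) : Prop :=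
  Tendsto (partialDensity A) atTop (nhds d)

/-- `A ⊆ ℕ` has density 1. -/
def Density1 (A : Set ℕ) : Prop := HasDensity A 1

/-- Partial recursive functions relative to an oracle `O : ℕ →. ℕ`
(relativization of `Nat.Partrec`). -/
inductive RecIn (O : ℕ →. ℕ) : (ℕ →. ℕ) → Prop
  | zero : RecIn O (pure 0)
  | succ : RecIn O ↑(Nat.succ)
  | left : RecIn O ↑fun n : ℕ => n.unpair.1
  | right : RecIn O ↑fun n : ℕ => n.unpair.2
  | oracle : RecIn O O
  | pair {f g} : RecIn O f → RecIn O g → RecIn O fun n => Nat.pair <$> f n <*> g n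
  | comp {f g} : RecIn O f → RecIn O g → RecIn O fun n => g n >>= f
  | prec {f g} : RecIn O f → RecIn O g → RecIn O (Nat.unpaired fun a n =>
      n.rec (f a) fun y IH => do let i ← IH; g (Nat.pair a (Nat.pair y i)))
  | rfind {f} : RecIn O f → RecIn O fun a =>
      Nat.rfind fun n => (fun m => m = 0) <$> f (Nat.pair a n)

open Classical in
/-- The characteristic function of a set of naturals, as a (total) partial function. -/
noncomputable def chi (A : Set ℕ) : ℕ →. ℕ :=
  fun n => Part.some (if n ∈ A then 1 else 0)

/-- `A` Turing-computes `B`. -/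
def TuringComputes (A B : Set ℕ) : Prop := RecIn (chi A) (chi B)

/-- `A` generically computes `C`: some `{0,1}`-valued partial function, partial recursive
in `A`, has density-1 domain and is correct about membership in `C` wherever defined. -/
def GenericallyComputes (A C : Set ℕ) : Prop :=
  ∃ φ : ℕ →. ℕ, RecIn (chi A) φ ∧
    Density1 {n | (φ n).Dom} ∧
    (∀ n v, v ∈ φ n → v = 0 ∨ v = 1) ∧
    (∀ n, 1 ∈ φ n → n ∈ C) ∧ (∀ n, 0 ∈ φ n → n ∉ C)

/-- `C` is generically computable (no oracle). -/
def GenericallyComputable (C : Set ℕ) : Prop :=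
  ∃ φ : ℕ →. ℕ, Nat.Partrec φ ∧
    Density1 {n | (φ n).Dom} ∧
    (∀ n v, v ∈ φ n → v = 0 ∨ v = 1) ∧
    (∀ n, 1 ∈ φ n → n ∈ C) ∧ (∀ n, 0 ∈ φ n → n ∉ C)

/-!
Take subsets `X i` of `ℕ` that are sufficiently generic in the sense of Baire category, and let
`Z i` agree with `X i` off the perfect squares, while its restriction to the squares stores every
`X j` with `R i j`. If `R i j`, then `Z i` computes `Z j` off the squares, a set of density 1.
If not `R i j`, then `Z i` does not depend on `X j`. Suppose that a program with oracle `Z i` is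
correct about `X j` at infinitely many non-squares. Flipping one bit of `X j` at a large such
non-square makes the program err and leaves its oracle unchanged, so `X` is a limit of families
on which the program errs. The families on which it errs form an open set, and generic families
avoid its boundary, so the program also errs on `X` itself.
-/

open Topology

theorem partialDensity_nonneg (A : Set ℕ) (n : ℕ) : 0 ≤ partialDensity A n := by
  unfold partialDensity
  positivity

theorem hasDensity_zero_of_finite {A : Set ℕ} (hA : A.Finite) : HasDensity A 0 := by
  refine squeeze_zero (partialDensity_nonneg _) (fun n => ?_)
    (tendsto_const_div_atTop_nhds_zero_nat (A.ncard : ℝ))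
  unfold partialDensity
  gcongr
  exact Set.inter_subset_left

theorem HasDensity.zero_mono {A B : Set ℕ} (hB : HasDensity B 0) (hAB : A ⊆ B) :
    HasDensity A 0 := by
  refine squeeze_zero (partialDensity_nonneg _) (fun n => ?_) hB
  unfold partialDensity
  gcongr
  exact (Set.finite_Iio n).inter_of_right B

theorem HasDensity.zero_union {A B : Set ℕ} (hA : HasDensity A 0) (hB : HasDensity B 0) :
    HasDensity (A ∪ B) 0 := by
  refine squeeze_zero (partialDensity_nonneg _) (fun n => ?_)
    (by simpa using Tendsto.add hA hB)
  unfold partialDensity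
  rw [← add_div, Set.union_inter_distrib_right]
  gcongr
  exact_mod_cast Set.ncard_union_le _ _

theorem HasDensity.compl {A : Set ℕ} {d : ℝ} (hA : HasDensity A d) : HasDensity Aᶜ (1 - d) := by
  refine (tendsto_const_nhds.sub hA).congr' ?_
  filter_upwards [eventually_ne_atTop 0] with n hn
  have hcard : (A ∩ Set.Iio n).ncard + (Aᶜ ∩ Set.Iio n).ncard = n := by
    have := Set.ncard_inter_add_ncard_sdiff_eq_ncard (Set.Iio n) A (Set.finite_Iio n)
    rwa [Set.inter_comm, Set.sdiff_eq, Set.inter_comm _ Aᶜ, Set.ncard_Iio_nat] at this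
  have hn' : (n : ℝ) ≠ 0 := by exact_mod_cast hn
  rw [partialDensity, partialDensity, one_sub_div hn']
  congr 1
  rw [sub_eq_iff_eq_add']
  exact_mod_cast hcard.symm

theorem Density1.infinite_diff {D S : Set ℕ} (hD : Density1 D) (hS : HasDensity S 0) :
    (D \ S).Infinite := by
  intro hfin
  have hD0 : HasDensity D 0 := ((hasDensity_zero_of_finite hfin).zero_union hS).zero_mono
    (by rw [Set.sdiff_union_self]; exact Set.subset_union_left)
  exact one_ne_zero (tendsto_nhds_unique hD hD0)

theorem ncard_isSquare_inter_Iio_le (n : ℕ) :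
    ({m : ℕ | IsSquare m} ∩ Set.Iio n).ncard ≤ Nat.sqrt n + 1 := by
  have hsub : {m : ℕ | IsSquare m} ∩ Set.Iio n ⊆ (fun k => k * k) '' Set.Iio (Nat.sqrt n + 1) := by
    rintro _ ⟨⟨k, rfl⟩, hk : k * k < n⟩
    exact ⟨k, Nat.lt_succ_of_le (Nat.le_sqrt.2 hk.le), rfl⟩
  calc ({m : ℕ | IsSquare m} ∩ Set.Iio n).ncard
      ≤ ((fun k => k * k) '' Set.Iio (Nat.sqrt n + 1)).ncard := Set.ncard_le_ncard hsub
    _ ≤ (Set.Iio (Nat.sqrt n + 1)).ncard := Set.ncard_image_le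
    _ = Nat.sqrt n + 1 := Set.ncard_Iio_nat _

theorem hasDensity_isSquare : HasDensity {m : ℕ | IsSquare m} 0 := by
  have hlim : Tendsto (fun n : ℕ => (√n)⁻¹ + (n : ℝ)⁻¹) atTop (𝓝 0) := by
    simpa using (tendsto_inv_atTop_zero.comp
      (Real.tendsto_sqrt_atTop.comp tendsto_natCast_atTop_atTop)).add
      tendsto_inv_atTop_nhds_zero_nat
  refine squeeze_zero (partialDensity_nonneg _) (fun n => ?_) hlim
  calc partialDensity {m | IsSquare m} n
      ≤ (√n + 1) / n := by
        unfold partialDensity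
        gcongr
        calc (({m : ℕ | IsSquare m} ∩ Set.Iio n).ncard : ℝ)
            ≤ Nat.sqrt n + 1 := by exact_mod_cast ncard_isSquare_inter_Iio_le n
          _ ≤ √n + 1 := by gcongr; exact Real.nat_sqrt_le_real_sqrt
    _ = (√n)⁻¹ + (n : ℝ)⁻¹ := by rw [add_div, Real.sqrt_div_self, one_div]

theorem primrecPred_isSquare : PrimrecPred (IsSquare : ℕ → Prop) :=
  (Primrec.eq.comp (Primrec.nat_mul.comp Primrec.nat_sqrt Primrec.nat_sqrt) Primrec.id).of_eq
    fun m => (Nat.exists_mul_self m).symm.trans <| by simp only [IsSquare, eq_comm]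

theorem RecIn.of_partrec {O f : ℕ →. ℕ} (hf : Nat.Partrec f) : RecIn O f := by
  induction hf with
  | zero => exact .zero
  | succ => exact .succ
  | left => exact .left
  | right => exact .right
  | pair _ _ ihf ihg => exact .pair ihf ihg
  | comp _ _ ihf ihg => exact .comp ihf ihg
  | prec _ _ ihf ihg => exact .prec ihf ihg
  | rfind _ ihf => exact .rfind ihf

theorem mem_chi {A : Set ℕ} {n v : ℕ} : v ∈ chi A n ↔ n ∈ A ∧ v = 1 ∨ n ∉ A ∧ v = 0 := by
  by_cases hn : n ∈ A <;> simp [chi, hn]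

theorem genericallyComputes_of_partrec {A C : Set ℕ} {g : ℕ →. ℕ} (hg : Nat.Partrec g)
    (hdom : Density1 g.Dom) (hgAC : ∀ m, ∀ n ∈ g m, n ∈ A ↔ m ∈ C) :
    GenericallyComputes A C := by
  have hmem : ∀ m v, v ∈ (g m >>= chi A) → m ∈ C ∧ v = 1 ∨ m ∉ C ∧ v = 0 := by
    intro m v hv
    obtain ⟨n, hn, hvn⟩ := Part.mem_bind_iff.1 hv
    rwa [← hgAC m n hn, ← mem_chi]
  refine ⟨fun m => g m >>= chi A, .comp .oracle (.of_partrec hg), ?_, fun m v hv => ?_,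
    fun m hv => ?_, fun m hv => ?_⟩
  · convert hdom using 1
    ext m
    exact ⟨fun ⟨h, _⟩ => h, fun h => ⟨h, trivial⟩⟩
  all_goals have := hmem m _ hv; grind

/-- Programs for partial functions recursive in an oracle, with one constructor for each rule
of `RecIn`. Unlike `RecIn`, they let one computation be run on varying oracles. -/
inductive OracleCode : Type
  | zero
  | succ
  | left
  | right
  | oracle
  | pair (c d : OracleCode)
  | comp (c d : OracleCode)
  | prec (c d : OracleCode)
  | rfind (c : OracleCode)
  deriving Countable

namespace OracleCode

/-- The partial function computed by a program from the oracle `O`. -/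
def eval (O : ℕ →. ℕ) : OracleCode → (ℕ →. ℕ)
  | zero => pure 0
  | succ => ↑(Nat.succ)
  | left => ↑fun n : ℕ => n.unpair.1
  | right => ↑fun n : ℕ => n.unpair.2
  | oracle => O
  | pair c d => fun n => Nat.pair <$> eval O c n <*> eval O d n
  | comp c d => fun n => eval O d n >>= eval O c
  | prec c d => Nat.unpaired fun a n =>
      n.rec (eval O c a) fun y IH => do let i ← IH; eval O d (Nat.pair a (Nat.pair y i))
  | rfind c => fun a => Nat.rfind fun n => (fun m => m = 0) <$> eval O c (Nat.pair a n)

theorem exists_eval_eq {O f : ℕ →. ℕ} (hf : RecIn O f) : ∃ c : OracleCode, c.eval O = f := by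
  induction hf with
  | zero => exact ⟨zero, rfl⟩
  | succ => exact ⟨succ, rfl⟩
  | left => exact ⟨left, rfl⟩
  | right => exact ⟨right, rfl⟩
  | oracle => exact ⟨oracle, rfl⟩
  | pair _ _ ihf ihg =>
    obtain ⟨⟨c, rfl⟩, ⟨d, rfl⟩⟩ := And.intro ihf ihg
    exact ⟨pair c d, rfl⟩
  | comp _ _ ihf ihg =>
    obtain ⟨⟨c, rfl⟩, ⟨d, rfl⟩⟩ := And.intro ihf ihg
    exact ⟨comp c d, rfl⟩
  | prec _ _ ihf ihg =>
    obtain ⟨⟨c, rfl⟩, ⟨d, rfl⟩⟩ := And.intro ihf ihg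
    exact ⟨prec c d, rfl⟩
  | rfind _ ihf =>
    obtain ⟨c, rfl⟩ := ihf
    exact ⟨rfind c, rfl⟩

theorem mem_eval_rfind {O : ℕ →. ℕ} {c : OracleCode} {n v : ℕ} :
    v ∈ (rfind c).eval O n ↔
      0 ∈ c.eval O (Nat.pair n v) ∧ ∀ m < v, ∃ w ∈ c.eval O (Nat.pair n m), w ≠ 0 :=
  Nat.mem_rfind.trans (by simp)

/-- The use principle: a convergent computation queries the oracle only finitely often. -/
theorem eventually_mem_eval {T : Type*} {l : Filter T} {O : T → ℕ →. ℕ} {P : ℕ →. ℕ}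
    (hO : ∀ n, ∀ v ∈ P n, ∀ᶠ x in l, v ∈ O x n) (c : OracleCode) {n v : ℕ}
    (hv : v ∈ c.eval P n) : ∀ᶠ x in l, v ∈ c.eval (O x) n := by
  induction c generalizing n v with
  | zero | succ | left | right => exact Eventually.of_forall fun _ => hv
  | oracle => exact hO n v hv
  | pair c d ihc ihd =>
    simp only [eval, Seq.seq, Part.map_eq_map, Part.bind_map, Part.mem_bind_iff,
      Part.mem_map_iff] at hv ⊢
    obtain ⟨a, ha, b, hb, rfl⟩ := hv
    filter_upwards [ihc ha, ihd hb] with x hxa hxb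
    exact ⟨a, hxa, b, hxb, rfl⟩
  | comp c d ihc ihd =>
    obtain ⟨a, ha, hav⟩ := Part.mem_bind_iff.1 hv
    filter_upwards [ihd ha, ihc hav] with x hxa hxv
    exact Part.mem_bind_iff.2 ⟨a, hxa, hxv⟩
  | prec c d ihc ihd =>
    obtain ⟨⟨a, k⟩, rfl⟩ := Nat.pairEquiv.surjective n
    simp only [eval, Nat.pairEquiv_apply, Function.uncurry_apply_pair, Nat.unpaired,
      Nat.unpair_pair] at hv ⊢
    induction k generalizing v with
    | zero => exact ihc hv
    | succ k ih =>
      obtain ⟨i, hi, hiv⟩ := Part.mem_bind_iff.1 hv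
      filter_upwards [ih hi, ihd hiv] with x hxi hxv
      exact Part.mem_bind_iff.2 ⟨i, hxi, hxv⟩
  | rfind c ihc =>
    obtain ⟨hv0, hlt⟩ := mem_eval_rfind.1 hv
    choose! w hw hw0 using hlt
    filter_upwards [ihc hv0, (eventually_all_finite (Set.finite_Iio v)).2
      fun m hm => ihc (hw m hm)] with x hx0 hxlt
    exact mem_eval_rfind.2 ⟨hx0, fun m hm => ⟨w m, hxlt m hm, hw0 m hm⟩⟩

theorem eventually_mem_eval_chi {T : Type*} {l : Filter T} {A : T → Set ℕ} {B : Set ℕ}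
    (hA : ∀ n, ∀ᶠ x in l, n ∈ A x ↔ n ∈ B) (c : OracleCode) {n v : ℕ}
    (hv : v ∈ c.eval (chi B) n) : ∀ᶠ x in l, v ∈ c.eval (chi (A x)) n := by
  refine c.eventually_mem_eval (fun n v hv => ?_) hv
  filter_upwards [hA n] with x hx
  rwa [mem_chi, hx, ← mem_chi]

end OracleCode

theorem tendsto_update_cofinite {α β : Type*} [DecidableEq α] [TopologicalSpace β]
    (x u : α → β) : Tendsto (fun a => Function.update x a (u a)) cofinite (𝓝 x) := by
  refine tendsto_pi_nhds.2 fun b => tendsto_const_nhds.congr' ?_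
  filter_upwards [(Set.finite_singleton b).compl_mem_cofinite] with a ha
  exact (Function.update_of_ne (Ne.symm ha) _ _).symm

theorem eventually_apply_apply_eq {ι κ β : Type*} [TopologicalSpace β] [DiscreteTopology β]
    (X : ι → κ → β) (k : ι) (n : κ) : ∀ᶠ Y in 𝓝 X, Y k n = X k n :=
  tendsto_pure.1 (nhds_discrete β ▸ (continuous_apply_apply k n).tendsto X)

section asymmJoin

variable {ι : Type*} [Encodable ι] {R : ι → ι → Prop} {X : ι → ℕ → Bool} {i j : ι}

/-- The asymmetric join `Z i` of a family of sets `X`, given by characteristic functions: it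
agrees with `X i` off the perfect squares, and the square of `⟨n, j⟩` records whether `n ∈ X j`
for those `j` with `R i j`. -/
def asymmJoin (R : ι → ι → Prop) (X : ι → ℕ → Bool) (i : ι) : Set ℕ :=
  {m | ¬IsSquare m ∧ X i m ∨ ∃ n j, R i j ∧ X j n ∧ m = Nat.pair n (Encodable.encode j) ^ 2}

theorem mem_asymmJoin_of_not_isSquare {m : ℕ} (hm : ¬IsSquare m) :
    m ∈ asymmJoin R X i ↔ X i m := by
  refine ⟨?_, fun h => .inl ⟨hm, h⟩⟩
  rintro (⟨-, h⟩ | ⟨n, j, -, -, rfl⟩)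
  · exact h
  · exact absurd (.sq _) hm

theorem sq_pair_mem_asymmJoin (h : R i j) {n : ℕ} :
    Nat.pair n (Encodable.encode j) ^ 2 ∈ asymmJoin R X i ↔ X j n := by
  refine ⟨?_, fun hn => .inr ⟨n, j, h, hn, rfl⟩⟩
  rintro (⟨hsq, -⟩ | ⟨n', j', -, hn, heq⟩)
  · exact absurd (.sq _) hsq
  · obtain ⟨rfl, hj⟩ := Nat.pair_eq_pair.1 (Nat.pow_left_injective two_ne_zero heq)
    rwa [Encodable.encode_injective hj]

theorem genericallyComputes_asymmJoin (h : R i j) :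
    GenericallyComputes (asymmJoin R X i) (asymmJoin R X j) := by
  let g : ℕ →. ℕ := fun m =>
    bif decide (IsSquare m) then Part.none else Part.some (Nat.pair m (Encodable.encode j) ^ 2)
  have hg : Nat.Partrec g := by
    have hpair : Primrec fun m => Nat.pair m (Encodable.encode j) :=
      Primrec₂.natPair.comp Primrec.id (Primrec.const _)
    refine Partrec.nat_iff.1 <| Partrec.cond primrecPred_isSquare.decide.to_comp Partrec.none ?_
    exact ((Primrec.nat_mul.comp hpair hpair).of_eq fun _ => (sq _).symm).to_comp.partrec
  refine genericallyComputes_of_partrec hg ?_ fun m n hn => ?_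
  · have hdom : g.Dom = {m | IsSquare m}ᶜ := by
      ext m
      by_cases hm : IsSquare m <;> simp [g, PFun.Dom, hm]
    simpa only [Density1, hdom, sub_zero] using hasDensity_isSquare.compl
  · by_cases hm : IsSquare m
    · simp [g, hm] at hn
    · obtain rfl : n = Nat.pair m (Encodable.encode j) ^ 2 := by simpa [g, hm] using hn
      rw [sq_pair_mem_asymmJoin h, mem_asymmJoin_of_not_isSquare hm]

theorem eventually_mem_asymmJoin_iff (R : ι → ι → Prop) (X : ι → ℕ → Bool) (i : ι) (m : ℕ) :
    ∀ᶠ Y in 𝓝 X, m ∈ asymmJoin R Y i ↔ m ∈ asymmJoin R X i := by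
  by_cases hm : ∃ n j, R i j ∧ m = Nat.pair n (Encodable.encode j) ^ 2
  · obtain ⟨n, j, hR, rfl⟩ := hm
    filter_upwards [eventually_apply_apply_eq X j n] with Y hY
    rw [sq_pair_mem_asymmJoin hR, sq_pair_mem_asymmJoin hR, hY]
  · filter_upwards [eventually_apply_apply_eq X i m] with Y hY
    simp only [asymmJoin, Set.mem_ofPred_eq, hY]
    grind

theorem asymmJoin_update [DecidableEq ι] (hij : i ≠ j) (h : ¬R i j) (x : ℕ → Bool) :
    asymmJoin R (Function.update X j x) i = asymmJoin R X i := by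
  ext m
  simp only [asymmJoin, Function.update_of_ne hij, Set.mem_ofPred_eq]
  refine or_congr_right (exists₂_congr fun n k => and_congr_right fun hk => ?_)
  rw [Function.update_of_ne (by rintro rfl; exact h hk)]

/-- The families `X` for which the program `c`, with oracle `asymmJoin R X i`, outputs a wrong
value of `X j` at some argument that is not a perfect square. -/
def errorSet (R : ι → ι → Prop) (c : OracleCode) (i j : ι) : Set (ι → ℕ → Bool) :=
  {X | ∃ m, ¬IsSquare m ∧ (!X j m).toNat ∈ c.eval (chi (asymmJoin R X i)) m}

theorem isOpen_errorSet (R : ι → ι → Prop) (c : OracleCode) (i j : ι) :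
    IsOpen (errorSet R c i j) := by
  refine isOpen_iff_eventually.2 fun X ⟨m, hm, herr⟩ => ?_
  filter_upwards [eventually_apply_apply_eq X j m,
    c.eventually_mem_eval_chi (eventually_mem_asymmJoin_iff R X i) herr] with Y hY hYerr
  exact ⟨m, hm, hY ▸ hYerr⟩

theorem mem_closure_errorSet {c : OracleCode} (hij : i ≠ j) (h : ¬R i j)
    (hinf : {m | ¬IsSquare m ∧ (X j m).toNat ∈ c.eval (chi (asymmJoin R X i)) m}.Infinite) :
    X ∈ closure (errorSet R c i j) := by
  classical
  have hflip : Tendsto (fun m => Function.update X j (Function.update (X j) m (!X j m)))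
      atTop (𝓝 X) := by
    have hcol := tendsto_update_cofinite (X j) fun m => !X j m
    rw [Nat.cofinite_eq_atTop] at hcol
    simpa only [Function.update_eq_self] using
      (tendsto_const_nhds (x := X)).update j hcol
  refine mem_closure_of_frequently_of_tendsto ?_ hflip
  refine (Nat.frequently_atTop_iff_infinite.2 hinf).mono fun m ⟨hm, hv⟩ => ⟨m, hm, ?_⟩
  simpa [asymmJoin_update hij h] using hv

theorem not_genericallyComputes_asymmJoin (hij : i ≠ j) (h : ¬R i j)
    (hX : ∀ c, X ∉ frontier (errorSet R c i j)) :
    ¬GenericallyComputes (asymmJoin R X i) (asymmJoin R X j) := by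
  rintro ⟨φ, hφ, hdom, hval, h1, h0⟩
  obtain ⟨c, rfl⟩ := OracleCode.exists_eval_eq hφ
  have hcorrect {m v : ℕ} (hm : ¬IsSquare m) (hv : v ∈ c.eval (chi (asymmJoin R X i)) m) :
      v = (X j m).toNat := by
    specialize h1 m
    specialize h0 m
    rw [mem_asymmJoin_of_not_isSquare hm] at h1 h0
    rcases hval m v hv with rfl | rfl
    · simp [Bool.eq_false_of_not_eq_true (h0 hv)]
    · simp [h1 hv]
  have hnot : X ∉ errorSet R c i j := by
    rintro ⟨m, hm, herr⟩
    exact absurd (hcorrect hm herr) (by cases X j m <;> decide)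
  have hclosure : X ∈ closure (errorSet R c i j) := by
    refine mem_closure_errorSet hij h ((hdom.infinite_diff hasDensity_isSquare).mono ?_)
    rintro m ⟨hmdom, hm⟩
    obtain ⟨v, hv⟩ := Part.dom_iff_mem.1 hmdom
    exact ⟨hm, hcorrect hm hv ▸ hv⟩
  exact hX c ((isOpen_errorSet R c i j).frontier_eq ▸ ⟨hclosure, hnot⟩)

theorem eventually_residual_notMem_frontier_errorSet (R : ι → ι → Prop) :
    ∀ᶠ X in residual (ι → ℕ → Bool), ∀ c i j, X ∉ frontier (errorSet R c i j) := by
  simp only [eventually_countable_forall]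
  intro c i j
  have hopen := isOpen_errorSet R c i j
  have hres := coborder_mem_residual hopen.isLocallyClosed
  rwa [hopen.coborder_eq] at hres

end asymmJoin

theorem exists_forall_genericallyComputes_iff {ι : Type*} [Countable ι] (R : ι → ι → Prop)
    (hR : ∀ i, R i i) :
    ∃ Z : ι → Set ℕ, ∀ i j, GenericallyComputes (Z i) (Z j) ↔ R i j := by
  let _ : Encodable ι := Encodable.ofCountable ι
  obtain ⟨X, hX⟩ :=
    (dense_of_mem_residual (eventually_residual_notMem_frontier_errorSet R)).nonempty
  refine ⟨asymmJoin R X, fun i j => ⟨fun hgc => ?_, genericallyComputes_asymmJoin⟩⟩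
  by_contra h
  have hij : i ≠ j := by rintro rfl; exact h (hR i)
  exact not_genericallyComputes_asymmJoin hij h (fun c => hX c i j) hgc

-- Injectivity comes from doubling `α`: the second copy of `a` is computed, among first copies,
-- only by that of `a`.
theorem embed_reflexive_relation_into_generic_computation_general {α : Type*} [Countable α]
    (R : α → α → Prop) (hR : ∀ a, R a a) :
    ∃ Z : α → Set ℕ, Function.Injective Z ∧
      ∀ a b, R a b ↔ GenericallyComputes (Z a) (Z b) := by
  let p : α ⊕ α → α := Sum.elim id id
  obtain ⟨Z, hZ⟩ := exists_forall_genericallyComputes_iff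
    (fun x y : α ⊕ α => y.elim (R (p x)) (p x = ·)) (by rintro (a | a); exacts [hR a, rfl])
  refine ⟨Z ∘ Sum.inl, fun a b hab => ?_, fun a b => (hZ (.inl a) (.inl b)).symm⟩
  have hbb : GenericallyComputes (Z (.inl b)) (Z (.inr b)) := (hZ _ _).2 rfl
  rw [← show Z (.inl a) = Z (.inl b) from hab] at hbb
  exact (hZ _ _).1 hbb

/-- Every reflexive binary relation on ℕ is isomorphic to a family of subsets of ℕ under
relative generic computation; hence every reflexive binary relation on a countable type
embeds into the relation of relative generic computation. -/
theorem embed_reflexive_relation_into_generic_computation :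
    (∀ R : ℕ → ℕ → Prop, (∀ i, R i i) →
      ∃ Z : ℕ → Set ℕ, Function.Injective Z ∧
        ∀ i j, R i j ↔ GenericallyComputes (Z i) (Z j)) ∧
    (∀ (α : Type) [Countable α] (R' : α → α → Prop), (∀ a, R' a a) →
      ∃ Z : α → Set ℕ, Function.Injective Z ∧
        ∀ a b, R' a b ↔ GenericallyComputes (Z a) (Z b)) :=
  ⟨fun R hR => embed_reflexive_relation_into_generic_computation_general R hR,
    fun _ _ R' hR' => embed_reflexive_relation_into_generic_computation_general R' hR'⟩
end

section
/- For any sets A and B that are not Δ⁰₂ (not computable from the halting problem), A and B do not form a minimal pair for generic computability: there exists C, not generically computable, that is both generically A-computable and generically B-computable. -/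
open Filter

/-- The halting set `0′`. -/
def haltingSet : Set ℕ :=
  {n : ℕ | ((Denumerable.ofNat Nat.Partrec.Code n).eval n).Dom}

/-- `A` is `Δ⁰₂`: computable from the halting problem. -/
def Delta2 (A : Set ℕ) : Prop := TuringComputes haltingSet A

/-!
Cut `ℕ` into the blocks `[2 ^ k, 2 ^ (k + 1))`. On block `k` the functionals `φ` and `ψ` consult
about `log₄ k` bits of their oracle, and each string `σ` of that length, on each of the two sides,
owns binary digit positions of its own. At scale `u` it omits the elements of the block whose first
`u + 1` owned digits vanish, so distinct strings omit independent events of probability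
`2⁻¹⁻ᵘ`. `φ^A` enumerates the elements of a block except those that the initial segment of `A` omits
at scale `u`, which are withheld for the sake of the opponents `r ≤ u` until they are released. An
opponent is a c.e. set conjectured to contain at least half of every block from some point on.

A string is safe if the opponent misses at least three quarters of what it omits. By the second
moment method boundedly many strings of a block are safe, and if no extension of `τ` is safe, then
for all but boundedly many `σ` every extension of `τ` is hit together with `σ`: the opponent has
enumerated an element omitted by both. On the other hand, a set that is not `Δ⁰₂` cannot be a branch
of a `Σ⁰₂` tree of bounded width. Hence at infinitely many responses of the opponent a given long
initial segment of `A`, or of `B`, has no safe extension, and at infinitely many of these it is hit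
together with an initial segment of the other set.

Whether a length of initial segments is adequate for this purpose is a `Π⁰₂` question, so the least
adequate length is guessed along the stages. The response chosen at the least adequate length is
never released, on either side, and so the opponent enumerates an element missed by both `φ^A` and
`ψ^B`. Every other omission is eventually released; there are finitely many exceptions at each
scale, and therefore `φ^A` and `ψ^B` have density 1. The scales for `A` and `B` are picked by
interleaving the least risky lengths of the two sets, which makes the adequacy of a length on one
side enough for both.
-/

open Finset

namespace RecIn

variable {O g : ℕ →. ℕ} {f h : ℕ → ℕ}

theorem of_partrec_s18 (hg : Nat.Partrec g) : RecIn O g := by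
  induction hg with
  | zero => exact zero
  | succ => exact succ
  | left => exact left
  | right => exact right
  | pair _ _ h₁ h₂ => exact pair h₁ h₂
  | comp _ _ h₁ h₂ => exact comp h₁ h₂
  | prec _ _ h₁ h₂ => exact prec h₁ h₂
  | rfind _ h => exact rfind h

theorem of_eq {g' : ℕ →. ℕ} (hg : RecIn O g) (h : ∀ n, g n = g' n) : RecIn O g' :=
  (funext h : g = g') ▸ hg

theorem of_primrec (hf : Primrec f) : RecIn O fun n => Part.some (f n) :=
  of_partrec_s18 (Nat.Partrec.of_primrec (Primrec.nat_iff.1 hf))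

theorem pair_some (hf : RecIn O fun n => Part.some (f n)) (hh : RecIn O fun n => Part.some (h n)) :
    RecIn O fun n => Part.some (Nat.pair (f n) (h n)) :=
  (pair hf hh).of_eq fun n => by
    simp only [Seq.seq, Part.map_eq_map, Part.map_some, Part.bind_some]

theorem comp_some (hg : RecIn O g) (hf : RecIn O fun n => Part.some (f n)) :
    RecIn O fun n => g (f n) :=
  (comp hg hf).of_eq fun _ => Part.bind_some _ _

theorem comp_primrec (hg : RecIn O g) (hf : Primrec f) : RecIn O fun n => g (f n) :=
  comp_some hg (of_primrec hf)

end RecIn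

namespace MinimalPair


/-! ### Primitive recursive predicates -/

section PrimrecClosure

variable {α : Type*} [Primcodable α] {f g : α → ℕ} {p q : α → Prop} {P : α → ℕ → Prop}

theorem primrec_fun_id : Primrec fun a : α => a := Primrec.id

theorem primrec_pow (hf : Primrec f) (hg : Primrec g) : Primrec fun a => f a ^ g a :=
  (Primrec₂.unpaired'.1 Nat.Primrec.pow).comp hf hg

theorem primrecPred_imp (hp : PrimrecPred p) (hq : PrimrecPred q) :
    PrimrecPred fun a => p a → q a :=
  (hp.not.or hq).of_eq fun _ => imp_iff_not_or.symm

theorem primrecPred_forall_lt (hf : Primrec f) (hP : PrimrecPred fun b : α × ℕ => P b.1 b.2) :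
    PrimrecPred fun a => ∀ y < f a, P a y := by
  have hswap : PrimrecRel fun (y : ℕ) (a : α) => P a y := hP.comp (Primrec.snd.pair Primrec.fst)
  exact (hswap.forall_mem_list.comp (Primrec.list_range.comp hf) Primrec.id).of_eq
    fun a => by simp only [List.mem_range, id_eq]

theorem primrecPred_exists_lt (hf : Primrec f) (hP : PrimrecPred fun b : α × ℕ => P b.1 b.2) :
    PrimrecPred fun a => ∃ y < f a, P a y :=
  (primrecPred_forall_lt (P := fun a y => ¬ P a y) hf hP.not).not.of_eq fun a => by
    simp only [not_forall, not_not, exists_prop]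

theorem primrecPred_forall_le (hf : Primrec f) (hP : PrimrecPred fun b : α × ℕ => P b.1 b.2) :
    PrimrecPred fun a => ∀ y ≤ f a, P a y :=
  (primrecPred_forall_lt (Primrec.succ.comp hf) hP).of_eq fun _ => by
    simp only [Nat.lt_succ_iff]

theorem primrecPred_exists_le (hf : Primrec f) (hP : PrimrecPred fun b : α × ℕ => P b.1 b.2) :
    PrimrecPred fun a => ∃ y ≤ f a, P a y :=
  (primrecPred_exists_lt (Primrec.succ.comp hf) hP).of_eq fun _ => by
    simp only [Nat.lt_succ_iff]

theorem primrecPred_isLeast (hf : Primrec f) (hP : PrimrecPred fun b : α × ℕ => P b.1 b.2) :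
    PrimrecPred fun a => IsLeast {t | P a t} (f a) := by
  refine ((hP.comp (Primrec.id.pair hf)).and
    (primrecPred_forall_lt (P := fun a t => ¬ P a t) hf hP.not)).of_eq fun a => ?_
  simp only [IsLeast, mem_lowerBounds, Set.mem_ofPred_eq, id_eq]
  exact and_congr_right fun _ => forall_congr' fun t => by rw [← not_lt, imp_not_comm]

theorem primrecPred_testBit (hf : Primrec f) (hg : Primrec g) :
    PrimrecPred fun a => (f a).testBit (g a) = true :=
  (Primrec.eq.comp (Primrec.nat_mod.comp (Primrec.nat_div.comp hf (primrec_pow (.const 2) hg))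
    (.const 2)) (.const 1)).of_eq fun a => by simp [Nat.testBit_eq_decide_div_mod_eq]

theorem primrec_card_filter_range [∀ a, DecidablePred (P a)] (hf : Primrec f)
    (hP : PrimrecPred fun b : α × ℕ => P b.1 b.2) :
    Primrec fun a => #{y ∈ range (f a) | P a y} := by
  classical
  have hstep : Primrec₂ fun (a : α) (n : ℕ × ℕ) => n.2 + if P a n.1 then 1 else 0 :=
    Primrec.nat_add.comp (Primrec.snd.comp Primrec.snd) (Primrec.ite
      (hP.comp (Primrec.fst.pair (Primrec.fst.comp Primrec.snd))) (.const 1) (.const 0))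
  refine (Primrec.nat_rec' hf (.const 0) hstep).of_eq fun a => ?_
  rw [← Nat.count_eq_card_filter_range]
  induction f a with
  | zero => rfl
  | succ n ih => simp only [Nat.count_succ, ← ih]

theorem primrec_log {b : ℕ} (hb : 1 < b) (hf : Primrec f) : Primrec fun a => Nat.log b (f a) := by
  refine (Primrec.nat_findGreatest (p := fun a i => b ^ i ≤ f a) hf
    (Primrec.nat_le.comp (primrec_pow (.const b) Primrec.snd) (hf.comp Primrec.fst))).of_eq
    fun a => ?_
  refine Nat.findGreatest_eq_iff.2 ⟨Nat.log_le_self b _, fun h => ?_, fun i hi _ => ?_⟩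
  · exact Nat.pow_log_le_self b fun h0 => h (by rw [h0, Nat.log_zero_right])
  · exact (Nat.lt_pow_of_log_lt hb hi).not_ge

end PrimrecClosure

/-! ### Initial segments and the limit lemma -/

section LimitLemma

theorem mod_two_pow_mod_of_le (σ : ℕ) {c d : ℕ} (h : c ≤ d) : σ % 2 ^ d % 2 ^ c = σ % 2 ^ c :=
  Nat.mod_mod_of_dvd _ (pow_dvd_pow 2 h)

open Classical in
/-- The initial segment of `X` of length `c`, coded in binary. -/
noncomputable def initSeg (X : Set ℕ) : ℕ → ℕ
  | 0 => 0
  | c + 1 => initSeg X c + if c ∈ X then 2 ^ c else 0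

theorem initSeg_lt (X : Set ℕ) (c : ℕ) : initSeg X c < 2 ^ c := by
  induction c with
  | zero => simp [initSeg]
  | succ c ih => rw [initSeg, pow_succ]; split_ifs <;> omega

theorem initSeg_mod (X : Set ℕ) {c d : ℕ} (h : c ≤ d) : initSeg X d % 2 ^ c = initSeg X c := by
  classical
  induction d, h using Nat.le_induction with
  | base => exact Nat.mod_eq_of_lt (initSeg_lt X c)
  | succ d hd ih =>
    have hdvd : 2 ^ c ∣ if d ∈ X then 2 ^ d else 0 := by
      split_ifs
      exacts [pow_dvd_pow 2 hd, dvd_zero _]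
    rw [initSeg, Nat.add_mod, ih, Nat.mod_eq_zero_of_dvd hdvd, add_zero,
      Nat.mod_eq_of_lt (initSeg_lt X c)]

theorem testBit_initSeg (X : Set ℕ) {c n : ℕ} (h : n < c) :
    (initSeg X c).testBit n = true ↔ n ∈ X := by
  have hshort : (initSeg X c).testBit n = (initSeg X (n + 1)).testBit n := by
    rw [← initSeg_mod X h, Nat.testBit_mod_two_pow]; simp
  have hlt := initSeg_lt X n
  rw [hshort, initSeg]
  split_ifs with hn
  · simp [hn, Nat.testBit_eq_decide_div_mod_eq, Nat.add_div_right, Nat.div_eq_of_lt hlt]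
  · simp [hn, Nat.testBit_lt_two_pow hlt]

theorem recIn_initSeg (X : Set ℕ) : RecIn (chi X) fun n => Part.some (initSeg X n) := by
  classical
  -- the recursion step receives `Nat.pair 0 (Nat.pair n (initSeg X n))`
  have hbit : RecIn (chi X) fun w => Part.some (if w.unpair.2.unpair.1 ∈ X then 1 else 0) :=
    RecIn.oracle.comp_primrec (f := fun w => w.unpair.2.unpair.1) (by
      apply_rules (transparency := .reducible) [Primrec.fst.comp, Primrec.snd.comp,
        Primrec.unpair.comp, primrec_fun_id])
  have hcombine : Primrec fun w : ℕ =>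
      w.unpair.2.unpair.2.unpair.2 + w.unpair.1 * 2 ^ w.unpair.2.unpair.2.unpair.1 := by
    apply_rules (transparency := .reducible) [Primrec.nat_add.comp, Primrec.nat_mul.comp,
      primrec_pow, Primrec.const, Primrec.fst.comp, Primrec.snd.comp, Primrec.unpair.comp,
      primrec_fun_id]
  have hstep := (RecIn.of_primrec (O := chi X) hcombine).comp_some
    (hbit.pair_some (RecIn.of_primrec primrec_fun_id))
  have hrec := ((RecIn.of_primrec (O := chi X) (Primrec.const 0)).prec hstep).comp_primrec
    (f := fun n => Nat.pair 0 n) (Primrec₂.natPair.comp (.const 0) .id)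
  refine hrec.of_eq fun n => ?_
  simp only [Nat.unpaired, Nat.unpair_pair]
  induction n with
  | zero => rfl
  | succ n ih =>
    simp only at ih ⊢
    rw [ih]
    simp only [initSeg, Part.bind_eq_bind, Part.bind_some]
    split_ifs <;> simp

theorem rfind_decide_dom {p : ℕ → Prop} [DecidablePred p] :
    (Nat.rfind fun z => Part.some (decide (p z))).Dom ↔ ∃ z, p z :=
  Nat.rfind_dom.trans (exists_congr fun z => by simp)

theorem partrec_rfind_decide {P : ℕ → ℕ → Prop} [∀ n, DecidablePred (P n)]
    (hP : PrimrecPred fun a : ℕ × ℕ => P a.1 a.2) :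
    Partrec fun n => Nat.rfind fun z => Part.some (decide (P n z)) :=
  Partrec.rfind (p := fun n z => Part.some (decide (P n z))) hP.decide.to_comp.partrec

theorem primrec_unpair_pair : Primrec fun a : ℕ × ℕ => (a.1.unpair.1, a.1.unpair.2, a.2) :=
  have hunpair : Primrec fun a : ℕ × ℕ => a.1.unpair := Primrec.unpair.comp Primrec.fst
  (Primrec.fst.comp hunpair).pair ((Primrec.snd.comp hunpair).pair Primrec.snd)

theorem exists_recIn_mem_iff (X : Set ℕ) {l : ℕ → ℕ} (hl : Primrec l) {P : ℕ → ℕ → ℕ → Prop}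
    (hP : PrimrecPred fun a : ℕ × ℕ × ℕ => P a.1 a.2.1 a.2.2) :
    ∃ φ : ℕ →. ℕ, RecIn (chi X) φ ∧ ∀ y v, v ∈ φ y ↔ v = 1 ∧ ∃ S, P y (initSeg X (l y)) S := by
  classical
  have hsearch := partrec_rfind_decide (P := fun n S => P n.unpair.1 n.unpair.2 S)
    (hP.comp primrec_unpair_pair)
  have hone := hsearch.map (g := fun _ _ => 1) (Computable.const 1).to₂
  refine ⟨_, (RecIn.of_partrec_s18 (Partrec.nat_iff.1 hone)).comp_some
    ((RecIn.of_primrec primrec_fun_id).pair_some ((recIn_initSeg X).comp_primrec hl)),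
    fun y v => ?_⟩
  simp only [Part.mem_map_iff, Nat.unpair_pair]
  rw [exists_and_right, ← Part.dom_iff_mem, rfind_decide_dom, and_comm, eq_comm]

theorem exists_primrec_mem_haltingSet_iff {P : ℕ → ℕ → Prop}
    (hP : PrimrecPred fun a : ℕ × ℕ => P a.1 a.2) :
    ∃ q : ℕ → ℕ, Primrec q ∧ ∀ n, q n ∈ haltingSet ↔ ∃ z, P n z := by
  classical
  have hunpair : Primrec fun a : ℕ × ℕ => (a.1.unpair.1, a.2) :=
    (Primrec.fst.comp (Primrec.unpair.comp Primrec.fst)).pair Primrec.snd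
  obtain ⟨e, he⟩ := Nat.Partrec.Code.exists_code.1 (Partrec.nat_iff.1
    (partrec_rfind_decide (P := fun w z => P w.unpair.1 z) (hP.comp hunpair)))
  refine ⟨fun n => Encodable.encode (e.curry n),
    Primrec.encode.comp (Nat.Partrec.Code.primrec₂_curry.comp (.const e) .id), fun n => ?_⟩
  rw [← rfind_decide_dom]
  simp [haltingSet, Nat.Partrec.Code.eval_curry, he]

theorem exists_recIn_haltingSet_forall {R : ℕ → ℕ → ℕ → Prop}
    (hR : PrimrecPred fun a : ℕ × ℕ × ℕ => R a.1 a.2.1 a.2.2) (htotal : ∀ n, ∃ w, ∀ z, R n w z) :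
    ∃ f : ℕ → ℕ, RecIn (chi haltingSet) (fun n => Part.some (f n)) ∧ ∀ n z, R n (f n) z := by
  classical
  obtain ⟨q, hq, hhalt⟩ := exists_primrec_mem_haltingSet_iff
    (P := fun p z => ¬ R p.unpair.1 p.unpair.2 z) (hR.comp primrec_unpair_pair).not
  refine ⟨fun n => Nat.find (htotal n),
    ((RecIn.oracle (O := chi haltingSet)).comp_primrec hq).rfind.of_eq fun n => ?_,
    fun n => Nat.find_spec (htotal n)⟩
  have hzero : ∀ w, (fun m => decide (m = 0)) <$> chi haltingSet (q (Nat.pair n w)) =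
      Part.some (decide (∀ z, R n w z)) := fun w => by
    have := hhalt (Nat.pair n w)
    simp only [Nat.unpair_pair, ← not_forall] at this
    simp [chi, this]
  simp only [hzero]
  refine Part.eq_some_iff.2 (Nat.mem_rfind.2 ⟨?_, fun hm => ?_⟩)
  · exact Part.mem_some_iff.2 (decide_eq_true (Nat.find_spec (htotal n))).symm
  · exact Part.mem_some_iff.2 (decide_eq_false (Nat.find_min (htotal n) hm)).symm

/-- The set `S` is `Σ⁰₂`. The matrix `R` is primitive recursive, which is no loss of generality. -/
def Sigma2 (S : Set ℕ) : Prop :=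
  ∃ R : ℕ → ℕ → ℕ → Prop, (PrimrecPred fun a : ℕ × ℕ × ℕ => R a.1 a.2.1 a.2.2) ∧
    ∀ n, n ∈ S ↔ ∃ w, ∀ z, R n w z

theorem delta2_of_sigma2_of_sigma2_compl {X : Set ℕ} (hX : Sigma2 X) (hXc : Sigma2 Xᶜ) :
    Delta2 X := by
  classical
  obtain ⟨R, hR, hRX⟩ := hX
  obtain ⟨R', hR', hRX'⟩ := hXc
  let Q : ℕ → ℕ → ℕ → Prop := fun n w z =>
    w.unpair.1 = 1 ∧ R n w.unpair.2 z ∨ w.unpair.1 = 0 ∧ R' n w.unpair.2 z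
  have hQ : PrimrecPred fun a : ℕ × ℕ × ℕ => Q a.1 a.2.1 a.2.2 := by
    have hside : Primrec fun a : ℕ × ℕ × ℕ => a.2.1.unpair.1 :=
      Primrec.fst.comp (Primrec.unpair.comp (Primrec.fst.comp Primrec.snd))
    have hargs : Primrec fun a : ℕ × ℕ × ℕ => (a.1, a.2.1.unpair.2, a.2.2) :=
      Primrec.fst.pair ((Primrec.snd.comp (Primrec.unpair.comp (Primrec.fst.comp Primrec.snd))).pair
        (Primrec.snd.comp Primrec.snd))
    exact ((Primrec.eq.comp hside (.const 1)).and (hR.comp hargs)).or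
      ((Primrec.eq.comp hside (.const 0)).and (hR'.comp hargs))
  have htotal : ∀ n, ∃ w, ∀ z, Q n w z := fun n => by
    by_cases hn : n ∈ X
    · obtain ⟨w, hw⟩ := (hRX n).1 hn
      exact ⟨Nat.pair 1 w, fun z => Or.inl (by simpa using hw z)⟩
    · obtain ⟨w, hw⟩ := (hRX' n).1 hn
      exact ⟨Nat.pair 0 w, fun z => Or.inr (by simpa using hw z)⟩
  obtain ⟨f, hf, hfQ⟩ := exists_recIn_haltingSet_forall hQ htotal
  refine (RecIn.left.comp_some hf).of_eq fun n => ?_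
  have hval : (f n).unpair.1 = if n ∈ X then 1 else 0 := by
    rcases hfQ n 0 with ⟨h1, -⟩ | ⟨h0, -⟩
    · have hn : n ∈ X := (hRX n).2 ⟨(f n).unpair.2, fun z =>
        ((hfQ n z).resolve_right fun h => by omega).2⟩
      rw [h1, if_pos hn]
    · have hn : n ∈ Xᶜ := (hRX' n).2 ⟨(f n).unpair.2, fun z =>
        ((hfQ n z).resolve_left fun h => by omega).2⟩
      rw [h0, if_neg hn]
  exact congrArg Part.some hval

theorem exists_eventually_le_frequently_ge {ι : Type*} {N : ι → ℕ → ℕ} {b : ℕ} {i : ι}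
    (hb : ∀ᶠ c in atTop, N i c ≤ b) :
    ∃ k i, (∀ᶠ c in atTop, N i c ≤ k) ∧ ∀ j, ∃ᶠ c in atTop, k ≤ N j c := by
  classical
  have hex : ∃ k i, ∀ᶠ c in atTop, N i c ≤ k := ⟨b, i, hb⟩
  obtain ⟨i, hi⟩ := Nat.find_spec hex
  refine ⟨Nat.find hex, i, hi, fun j hj => ?_⟩
  have hpos : 0 < Nat.find hex := by
    obtain ⟨c, hc⟩ := hj.exists
    omega
  exact Nat.find_min hex (Nat.sub_lt hpos one_pos)
    ⟨j, hj.mono fun c hc => by dsimp only at hc; omega⟩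

-- `k` is the least number of nodes the tree eventually has above some node of the branch `X`. When
-- `k` nodes above this node are found at one level, they are all there are, so `X` is among them.
theorem exists_testBit_witness {X : Set ℕ} {T : ℕ → Finset ℕ} {b : ℕ}
    (hX : ∀ c, initSeg X c ∈ T c) (hT : ∀ c, #(T c) ≤ b) :
    ∃ k c₀ c₁, ∀ n v, (n ∈ X ↔ v = true) ↔ ∃ c > c₁ + n, ∃ F ⊆ T c, k ≤ #F ∧
      ∀ σ ∈ F, σ % 2 ^ c₀ = initSeg X c₀ ∧ σ.testBit n = v := by
  let above : ℕ → ℕ → Finset ℕ := fun c₀ c => {σ ∈ T c | σ % 2 ^ c₀ = initSeg X c₀}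
  obtain ⟨k, c₀, hle, hge⟩ := exists_eventually_le_frequently_ge (N := fun c₀ c => #(above c₀ c))
    (i := 0) (Eventually.of_forall fun c => (card_filter_le _ _).trans (hT c))
  obtain ⟨c₁, hc₁⟩ := eventually_atTop.1 hle
  have hbit : ∀ {n c : ℕ}, n < c → ∀ v, (n ∈ X ↔ v = true) ↔ (initSeg X c).testBit n = v :=
    fun h v => by rw [← testBit_initSeg X h, ← Bool.eq_iff_iff]
  refine ⟨k, c₀, c₁ + c₀, fun n v => ⟨fun hv => ?_, ?_⟩⟩
  · obtain ⟨c, hc, hk⟩ := frequently_atTop.1 (hge (c₀ + n + 1)) (c₁ + c₀ + n + 1)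
    refine ⟨c, hc, above (c₀ + n + 1) c, filter_subset _ _, hk, fun σ hσ => ?_⟩
    have hmod := (mem_filter.1 hσ).2
    constructor
    · rw [← mod_two_pow_mod_of_le σ (show c₀ ≤ c₀ + n + 1 by omega), hmod, initSeg_mod X (by omega)]
    · rw [← (hbit (show n < c₀ + n + 1 by omega) v).1 hv, ← hmod, Nat.testBit_mod_two_pow,
        decide_eq_true (by omega), Bool.true_and]
  · rintro ⟨c, hc, F, hFT, hk, hF⟩
    have hall : F = above c₀ c := eq_of_subset_of_card_le
      (fun σ hσ => mem_filter.2 ⟨hFT hσ, (hF σ hσ).1⟩) ((hc₁ c (by omega)).trans hk)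
    have hXF : initSeg X c ∈ F := hall ▸ mem_filter.2 ⟨hX c, initSeg_mod X (by omega)⟩
    exact (hbit (by omega) v).2 (hF _ hXF).2

theorem sigma2_exists_finset {R : ℕ → ℕ → ℕ → Prop} {P : ℕ → ℕ → Prop}
    (hR : PrimrecPred fun a : ℕ × ℕ × ℕ => R a.1 a.2.1 a.2.2)
    (hP : PrimrecPred fun a : ℕ × ℕ => P a.1 a.2) (k d : ℕ) :
    Sigma2 {n | ∃ c > d + n, ∃ F : Finset ℕ, k ≤ #F ∧
      ∀ σ ∈ F, (σ < 2 ^ c ∧ ∀ᶠ z in atTop, R c σ z) ∧ P n σ} := by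
  classical
  -- a witness `w` codes `c`, a stage from which on `R` holds, and the binary expansion of `F`
  let W : ℕ → ℕ → ℕ → Prop := fun n w z => w.unpair.1 > d + n ∧
    k ≤ #{σ ∈ range (2 ^ w.unpair.1) | w.unpair.2.unpair.2.testBit σ = true} ∧
    ∀ σ < 2 ^ w.unpair.1, w.unpair.2.unpair.2.testBit σ = true →
      (w.unpair.2.unpair.1 ≤ z → R w.unpair.1 σ z) ∧ P n σ
  refine ⟨W, ?_, fun n => ⟨?_, ?_⟩⟩
  · have hwitness : Primrec fun a : (ℕ × ℕ × ℕ) × ℕ => a.1.2 := Primrec.snd.comp .fst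
    have hRW : PrimrecPred fun a : (ℕ × ℕ × ℕ) × ℕ => R a.1.2.1.unpair.1 a.2 a.1.2.2 :=
      hR.comp ((Primrec.fst.comp (Primrec.unpair.comp (Primrec.fst.comp hwitness))).pair
        (Primrec.snd.pair (Primrec.snd.comp hwitness)))
    have hPW : PrimrecPred fun a : (ℕ × ℕ × ℕ) × ℕ => P a.1.1 a.2 :=
      hP.comp ((Primrec.fst.comp Primrec.fst).pair Primrec.snd)
    unfold W
    apply_rules (transparency := .reducible) (maxDepth := 1000) [PrimrecPred.and,
      primrecPred_imp, primrecPred_forall_lt, hRW, hPW, Primrec.nat_lt.comp, Primrec.nat_le.comp,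
      primrec_card_filter_range, primrecPred_testBit, primrec_pow, Primrec.nat_add.comp,
      Primrec.const, Primrec.fst, Primrec.snd, Primrec.fst.comp, Primrec.snd.comp,
      Primrec.unpair.comp, primrec_fun_id]
  · rintro ⟨c, hc, F, hk, hF⟩
    obtain ⟨m, hm⟩ := eventually_atTop.1
      ((eventually_all_finset F).2 fun σ hσ => (hF σ hσ).1.2)
    have hcode : ∀ σ < 2 ^ c, (initSeg (F : Set ℕ) (2 ^ c)).testBit σ = true ↔ σ ∈ F :=
      fun σ hσ => testBit_initSeg _ hσ
    refine ⟨Nat.pair c (Nat.pair m (initSeg F (2 ^ c))), fun z => ?_⟩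
    simp only [W, Nat.unpair_pair]
    refine ⟨hc, hk.trans (card_le_card fun σ hσ => ?_), fun σ hσ hbit => ?_⟩
    · have hlt := (hF σ hσ).1.1
      exact mem_filter.2 ⟨mem_range.2 hlt, (hcode σ hlt).2 hσ⟩
    · have hσF := (hcode σ hσ).1 hbit
      exact ⟨fun hz => hm z hz σ hσF, (hF σ hσF).2⟩
  · rintro ⟨w, hw⟩
    refine ⟨w.unpair.1, (hw 0).1, _, (hw 0).2.1, fun σ hσ => ?_⟩
    obtain ⟨hlt, hbit⟩ := mem_filter.1 hσ
    have hRP := fun z => (hw z).2.2 σ (mem_range.1 hlt) hbit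
    exact ⟨⟨mem_range.1 hlt, eventually_atTop.2 ⟨_, fun z hz => (hRP z).1 hz⟩⟩, (hRP 0).2⟩

open Classical in
theorem delta2_of_bounded_width {X : Set ℕ} {R : ℕ → ℕ → ℕ → Prop} {b : ℕ}
    (hR : PrimrecPred fun a : ℕ × ℕ × ℕ => R a.1 a.2.1 a.2.2)
    (hwidth : ∀ c, #{σ ∈ range (2 ^ c) | ∀ᶠ z in atTop, R c σ z} ≤ b)
    (hX : ∀ c, ∀ᶠ z in atTop, R c (initSeg X c) z) : Delta2 X := by
  obtain ⟨k, c₀, c₁, hk⟩ := exists_testBit_witness (X := X) (b := b)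
    (T := fun c => {σ ∈ range (2 ^ c) | ∀ᶠ z in atTop, R c σ z})
    (fun c => mem_filter.2 ⟨mem_range.2 (initSeg_lt X c), hX c⟩) hwidth
  have hstem : PrimrecPred fun a : ℕ × ℕ => a.2 % 2 ^ c₀ = initSeg X c₀ :=
    Primrec.eq.comp (Primrec.nat_mod.comp .snd (.const _)) (.const _)
  have hbit : PrimrecPred fun a : ℕ × ℕ => a.2.testBit a.1 = true :=
    primrecPred_testBit .snd .fst
  have hsubset : ∀ (c : ℕ) (F : Finset ℕ) (p : ℕ → Prop),
      (∀ σ ∈ F, (σ < 2 ^ c ∧ ∀ᶠ z in atTop, R c σ z) ∧ p σ) ↔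
        F ⊆ {σ ∈ range (2 ^ c) | ∀ᶠ z in atTop, R c σ z} ∧ ∀ σ ∈ F, p σ := fun c F p => by
    simp only [subset_iff, mem_filter, mem_range, forall_and]
  refine delta2_of_sigma2_of_sigma2_compl ?_ ?_
  · convert sigma2_exists_finset
      (P := fun n σ => σ % 2 ^ c₀ = initSeg X c₀ ∧ σ.testBit n = true)
      hR (hstem.and hbit) k c₁ using 1
    ext n
    simp only [hsubset, Set.mem_ofPred_eq]
    simpa [and_left_comm] using hk n true
  · convert sigma2_exists_finset
      (P := fun n σ => σ % 2 ^ c₀ = initSeg X c₀ ∧ ¬ σ.testBit n = true) hR (hstem.and hbit.not)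
      k c₁ using 1
    ext n
    simp only [hsubset, Set.mem_ofPred_eq]
    simpa [and_left_comm] using hk n false

open Classical in
theorem exists_frequently_forall_not_of_not_delta2 {X : Set ℕ} {Z : ℕ → Prop} {Q : ℕ → ℕ → Prop}
    {l : ℕ → ℕ} {b : ℕ} (hX : ¬ Delta2 X) (hZ : PrimrecPred Z)
    (hQ : PrimrecPred fun a : ℕ × ℕ => Q a.1 a.2) (hl : Primrec l) (hfreq : ∃ᶠ z in atTop, Z z)
    (hcard : ∀ z, Z z → #{σ ∈ range (2 ^ l z) | Q z σ} ≤ b) :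
    ∃ c, ∃ᶠ z in atTop, Z z ∧ ∀ σ < 2 ^ l z, σ % 2 ^ c = initSeg X c → ¬ Q z σ := by
  by_contra! hbranch
  let R : ℕ → ℕ → ℕ → Prop := fun c σ z => Z z → ∃ σ' < 2 ^ l z, σ' % 2 ^ c = σ ∧ Q z σ'
  have hR : PrimrecPred fun a : ℕ × ℕ × ℕ => R a.1 a.2.1 a.2.2 := by
    have hQR : PrimrecPred fun a : (ℕ × ℕ × ℕ) × ℕ => Q a.1.2.2 a.2 :=
      hQ.comp ((Primrec.snd.comp (Primrec.snd.comp .fst)).pair .snd)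
    unfold R
    apply_rules (transparency := .reducible) [primrecPred_imp, hZ.comp, primrecPred_exists_lt,
      PrimrecPred.and, Primrec.eq.comp, Primrec.nat_mod.comp, primrec_pow, hl.comp, Primrec.const,
      Primrec.fst.comp, Primrec.snd.comp, Primrec.fst, Primrec.snd, primrec_fun_id]
  refine hX (delta2_of_bounded_width (b := b) hR (fun c => ?_) fun c => (hbranch c).mono
    fun z hz hZz => hz hZz)
  have hall : ∀ᶠ z in atTop, ∀ σ ∈ ({σ ∈ range (2 ^ c) | ∀ᶠ z in atTop, R c σ z} : Finset ℕ),
      R c σ z := (eventually_all_finset _).2 fun σ hσ => (mem_filter.1 hσ).2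
  obtain ⟨z, hZz, hz⟩ := (hfreq.and_eventually hall).exists
  refine (card_le_card fun σ hσ => ?_).trans
    ((card_image_le (f := (· % 2 ^ c))).trans (hcard z hZz))
  obtain ⟨σ', hlt, hmod, hQσ'⟩ := hz σ hσ hZz
  exact mem_image.2 ⟨σ', mem_filter.2 ⟨mem_range.2 hlt, hQσ'⟩, hmod⟩
end LimitLemma

/-! ### The second moment method -/

section SecondMoment

variable {α ι : Type*} [DecidableEq α]

theorem sq_sum_card_inter_le (A : ι → Finset α) (F : Finset α) (I : Finset ι) :
    (∑ i ∈ I, #(A i ∩ F)) ^ 2 ≤ #F * ∑ i ∈ I, ∑ j ∈ I, #(A i ∩ A j) := by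
  let g : α → ℕ := fun x => ∑ i ∈ I, if x ∈ A i then 1 else 0
  have hcard : ∀ S T : Finset α, #(S ∩ T) = ∑ x ∈ T, if x ∈ S then 1 else 0 := fun S T => by
    rw [sum_boole, filter_mem_eq_inter, inter_comm, Nat.cast_id]
  have hg : ∑ i ∈ I, #(A i ∩ F) = ∑ x ∈ F, g x := by
    rw [sum_comm]
    exact sum_congr rfl fun i _ => hcard _ _
  have hsq : ∀ x, g x ^ 2 = ∑ i ∈ I, ∑ j ∈ I, if x ∈ A i ∩ A j then 1 else 0 := fun x => by
    rw [sq, sum_mul_sum]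
    refine sum_congr rfl fun i _ => sum_congr rfl fun j _ => ?_
    simp only [ite_zero_mul_ite_zero, one_mul, mem_inter]
  calc (∑ i ∈ I, #(A i ∩ F)) ^ 2 ≤ #F * ∑ x ∈ F, g x ^ 2 := hg ▸ sq_sum_le_card_mul_sum_sq
    _ = #F * ∑ i ∈ I, ∑ j ∈ I, #(A i ∩ A j ∩ F) := by
      simp_rw [hsq, hcard]
      rw [sum_comm]
      exact congrArg _ (sum_congr rfl fun i _ => sum_comm)
    _ ≤ _ := Nat.mul_le_mul_left _ (sum_le_sum fun i _ => sum_le_sum fun j _ =>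
      card_le_card inter_subset_left)

-- The `A i` are independent events of probability `p` in a space of `d` points.
theorem card_mul_le_of_almost_independent {A : ι → Finset α} {F : Finset α} {I : Finset ι}
    {d p θ μ : ℝ} (hd : 0 < d) (hp : 0 < p) (hθ : 0 ≤ θ) (hA : ∀ i ∈ I, #(A i) = p * d)
    (hAA : (I : Set ι).Pairwise fun i j => #(A i ∩ A j) = p ^ 2 * d) (hF : #F ≤ μ * d)
    (hAF : ∀ i ∈ I, θ * #(A i) ≤ #(A i ∩ F)) : #I * p * (θ ^ 2 - μ) ≤ μ := by
  classical
  have hμ : 0 ≤ μ := nonneg_of_mul_nonneg_left ((Nat.cast_nonneg _).trans hF) hd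
  have hlower : #I * (θ * (p * d)) ≤ ∑ i ∈ I, (#(A i ∩ F) : ℝ) := by
    rw [← nsmul_eq_mul]
    exact card_nsmul_le_sum I _ _ fun i hi => hA i hi ▸ hAF i hi
  have hrow : ∀ i ∈ I, ∑ j ∈ I, (#(A i ∩ A j) : ℝ) ≤ p * d + #I * (p ^ 2 * d) := fun i hi => by
    have hoff : ∑ j ∈ I.erase i, (#(A i ∩ A j) : ℝ) = #(I.erase i) * (p ^ 2 * d) := by
      rw [← nsmul_eq_mul]
      exact sum_eq_card_nsmul fun j hj =>
        hAA hi (mem_of_mem_erase hj) (ne_of_mem_erase hj).symm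
    rw [← add_sum_erase I _ hi, inter_self, hA i hi, hoff]
    gcongr
    exact erase_subset i I
  have hupper : ∑ i ∈ I, ∑ j ∈ I, (#(A i ∩ A j) : ℝ) ≤ #I * (p * d + #I * (p ^ 2 * d)) := by
    rw [← nsmul_eq_mul]
    exact sum_le_card_nsmul I _ _ hrow
  have hsq : (#I * (θ * (p * d))) ^ 2 ≤ μ * d * (#I * (p * d + #I * (p ^ 2 * d))) := by
    calc (#I * (θ * (p * d))) ^ 2 ≤ (∑ i ∈ I, (#(A i ∩ F) : ℝ)) ^ 2 := by gcongr
      _ ≤ #F * ∑ i ∈ I, ∑ j ∈ I, (#(A i ∩ A j) : ℝ) := mod_cast sq_sum_card_inter_le A F I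
      _ ≤ _ := mul_le_mul hF hupper
        (sum_nonneg fun i _ => sum_nonneg fun j _ => Nat.cast_nonneg _) (mul_nonneg hμ hd.le)
  rcases I.eq_empty_or_nonempty with rfl | hI
  · simpa using hμ
  · have hpos : 0 < #I * p * d ^ 2 := by
      have := hI.card_pos
      positivity
    refine le_of_mul_le_mul_left (a := #I * p * d ^ 2) ?_ hpos
    linear_combination hsq

end SecondMoment

theorem card_le_mul_of_matching_le {α β : Type*} {S : Finset α} {R : α → β → Prop}
    [∀ b, DecidablePred (R · b)] {m n : ℕ} (hR : ∀ a ∈ S, ∃ b, R a b)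
    (hm : ∀ b, #{a ∈ S | R a b} ≤ m)
    (hn : ∀ M ⊆ S, ∀ f : α → β, Set.InjOn f M → (∀ a ∈ M, R a (f a)) → #M ≤ n) : #S ≤ m * n := by
  classical
  rcases S.eq_empty_or_nonempty with rfl | ⟨a, ha⟩
  · simp
  obtain ⟨b, -⟩ := hR a ha
  have : Nonempty β := ⟨b⟩
  choose! f hf using hR
  obtain ⟨M, hMS, hM, himage⟩ :=
    exists_subset_injOn_image_eq_of_surjOn (f := f) (S : Set α) (S.image f) (by simp [Set.SurjOn])
  refine (card_le_mul_card_image (f := f) S m fun b _ => ?_).trans (Nat.mul_le_mul_left _ ?_)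
  · refine (card_le_card fun a ha => ?_).trans (hm b)
    obtain ⟨haS, rfl⟩ := mem_filter.1 ha
    exact mem_filter.2 ⟨haS, hf a haS⟩
  · rw [← himage, card_image_of_injOn hM]
    exact hn M hMS f hM fun a ha => hf a (hMS ha)

section ZeroDigits

/-- The numbers below `2 ^ k` whose binary digits at the positions in `Q` vanish. -/
def zeroDigits (k : ℕ) (Q : Finset ℕ) : Finset ℕ :=
  {x ∈ range (2 ^ k) | ∀ i ∈ Q, ¬ x.testBit i = true}

variable {k : ℕ} {Q Q' : Finset ℕ}

theorem zeroDigits_inter : zeroDigits k Q ∩ zeroDigits k Q' = zeroDigits k (Q ∪ Q') := by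
  ext x
  simp only [zeroDigits, mem_inter, mem_filter, forall_mem_union]
  tauto

theorem card_zeroDigits (hQ : Q ⊆ range k) : #(zeroDigits k Q) = 2 ^ (k - #Q) := by
  classical
  have hcard : #(range k \ Q).powerset = 2 ^ (k - #Q) := by
    rw [card_powerset, card_sdiff_of_subset hQ, card_range]
  rw [← hcard]
  refine card_nbij' (fun x => {i ∈ range k | x.testBit i = true}) (fun S => initSeg S k)
    (fun x hx => ?_) (fun S hS => ?_) (fun x hx => ?_) fun S hS => ?_
  · have hx0 := (mem_filter.1 hx).2
    exact mem_powerset.2 fun i hi =>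
      mem_sdiff.2 ⟨(mem_filter.1 hi).1, fun hiQ => hx0 i hiQ (mem_filter.1 hi).2⟩
  · have hS := mem_powerset.1 hS
    refine mem_filter.2 ⟨mem_range.2 (initSeg_lt _ _), fun i hi h => ?_⟩
    exact (mem_sdiff.1 (hS ((testBit_initSeg (S : Set ℕ) (mem_range.1 (hQ hi))).1 h))).2 hi
  · have hx := mem_range.1 (mem_filter.1 hx).1
    refine Nat.eq_of_testBit_eq fun i => ?_
    rcases lt_or_ge i k with hi | hi
    · rw [Bool.eq_iff_iff, testBit_initSeg _ hi]
      simp [hi]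
    · have hle := Nat.pow_le_pow_right two_pos hi
      rw [Nat.testBit_lt_two_pow ((initSeg_lt _ _).trans_le hle),
        Nat.testBit_lt_two_pow (hx.trans_le hle)]
  · have hS := mem_powerset.1 hS
    ext i
    simp only [mem_filter]
    exact ⟨fun h => (testBit_initSeg (S : Set ℕ) (mem_range.1 h.1)).1 h.2, fun h =>
      have hi := (mem_sdiff.1 (hS h)).1
      ⟨hi, (testBit_initSeg (S : Set ℕ) (mem_range.1 hi)).2 h⟩⟩

theorem cast_card_zeroDigits (hQ : Q ⊆ range k) :
    (#(zeroDigits k Q) : ℝ) = (1 / 2) ^ #Q * 2 ^ k := by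
  have hle : #Q ≤ k := by simpa using card_le_card hQ
  rw [card_zeroDigits hQ, Nat.cast_pow, Nat.cast_ofNat, pow_sub₀ 2 two_ne_zero hle,
    one_div, inv_pow]
  ring

theorem card_zeroDigits_union (hQ : Q ⊆ range k) (hQ' : Q' ⊆ range k) (h : Disjoint Q Q') :
    (#(zeroDigits k (Q ∪ Q')) : ℝ) = (1 / 2) ^ #Q' * #(zeroDigits k Q) := by
  rw [cast_card_zeroDigits (union_subset hQ hQ'), cast_card_zeroDigits hQ, card_union_of_disjoint h]
  ring

theorem card_mul_le_of_pairwiseDisjoint_digits {ι : Type*} {n : ℕ} {Q₀ : Finset ℕ} {I : Finset ι}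
    {Q : ι → Finset ℕ} {F : Finset ℕ} {θ μ : ℝ} (hθ : 0 ≤ θ) (hQ₀ : Q₀ ⊆ range k)
    (hQ : ∀ i ∈ I, Q i ⊆ range k) (hn : ∀ i ∈ I, #(Q i) = n) (hd₀ : ∀ i ∈ I, Disjoint Q₀ (Q i))
    (hd : (I : Set ι).PairwiseDisjoint Q) (hF : #F ≤ μ * #(zeroDigits k Q₀))
    (hQF : ∀ i ∈ I, θ * #(zeroDigits k (Q₀ ∪ Q i)) ≤ #(zeroDigits k (Q₀ ∪ Q i) ∩ F)) :
    #I * (θ ^ 2 - μ) ≤ μ * 2 ^ n := by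
  have hpos : (0 : ℝ) < #(zeroDigits k Q₀) := by
    rw [card_zeroDigits hQ₀]
    positivity
  have hA : ∀ i ∈ I, (#(zeroDigits k (Q₀ ∪ Q i)) : ℝ) = (1 / 2) ^ n * #(zeroDigits k Q₀) :=
    fun i hi => by rw [card_zeroDigits_union hQ₀ (hQ i hi) (hd₀ i hi), hn i hi]
  have hAA : (I : Set ι).Pairwise fun i j =>
      (#(zeroDigits k (Q₀ ∪ Q i) ∩ zeroDigits k (Q₀ ∪ Q j)) : ℝ) =
        ((1 / 2) ^ n) ^ 2 * #(zeroDigits k Q₀) := fun i hi j hj hij => by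
    dsimp only
    rw [zeroDigits_inter, ← union_union_distrib_left, card_zeroDigits_union hQ₀
      (union_subset (hQ i hi) (hQ j hj)) (disjoint_union_right.2 ⟨hd₀ i hi, hd₀ j hj⟩),
      card_union_of_disjoint (hd hi hj hij), hn i hi, hn j hj, ← two_mul, pow_mul']
  have h := card_mul_le_of_almost_independent hpos (by positivity) hθ hA hAA hF hQF
  calc #I * (θ ^ 2 - μ) = #I * (1 / 2) ^ n * (θ ^ 2 - μ) * 2 ^ n := by
        rw [mul_right_comm _ ((1 / 2 : ℝ) ^ n), mul_assoc, ← mul_pow]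
        norm_num
    _ ≤ μ * 2 ^ n := by gcongr

end ZeroDigits

/-! ### The construction -/

/-- The number of oracle bits consulted on the block `[2 ^ k, 2 ^ (k + 1))`. The strings of that
length are so few compared with `k` that each can own binary digits of the elements of the block. -/
def depth (k : ℕ) : ℕ := Nat.log 4 k - 1

/-- The position of the binary digit that the string coded by `σ` owns at scale `i` among strings of
length `l`. The Boolean `s` tells which of the two oracles `σ` belongs to. -/
def digitPos (s : Bool) (l σ i : ℕ) : ℕ := 2 * (σ * (l + 1) + i) + s.toNat

/-- At scale `u` the string `σ` of side `s` omits the element `2 ^ k + x` of block `k`: all the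
digits of `x` it owns up to scale `u` vanish. -/
def Omits (s : Bool) (k u σ x : ℕ) : Prop :=
  ∀ i ≤ u, ¬ x.testBit (digitPos s (depth k) σ i) = true

/-- The opponent `r` has enumerated `y` by stage `t`. An opponent `r` codes a pair: a program, taken
to enumerate the inputs on which it outputs `1`, and a bound from which on this set is conjectured
to contain half of every block. -/
def EnumeratesBy (r t y : ℕ) : Prop :=
  Nat.Partrec.Code.evaln t (Denumerable.ofNat Nat.Partrec.Code r.unpair.1) y = some 1

open Classical in
/-- The opponent `r` has responded on block `k` by stage `t`, enumerating at least half of it. -/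
def RespondsBy (r k t : ℕ) : Prop :=
  2 ^ k ≤ 2 * #{x ∈ range (2 ^ k) | EnumeratesBy r t (2 ^ k + x)}

/-- The opponent `r` has responded by stage `t` on all the blocks below `m` it promised. -/
def RespondsBelowBy (r m t : ℕ) : Prop := ∀ k < m, r.unpair.2 ≤ k → RespondsBy r k t

/-- Block `k` is active for `r`: the stage `k` is the first at which the opponent has responded
below some `m ≤ k`. This makes an opponent breaking its promise have finitely many active blocks. -/
def Active (r k : ℕ) : Prop :=
  4 ≤ k ∧ r.unpair.2 ≤ k ∧ ∃ m ≤ k, IsLeast {t | RespondsBelowBy r m t} k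

/-- `z` codes a response of `r`: an active block together with the first stage at which the opponent
has responded on it. -/
def IsResponse (r z : ℕ) : Prop :=
  Active r z.unpair.1 ∧ IsLeast {t | RespondsBy r z.unpair.1 t} z.unpair.2

/-- The number of oracle bits consulted on the block of the response `z`. -/
def responseDepth (z : ℕ) : ℕ := depth z.unpair.1

/-- The `x`-th element of its block is enumerated in the response `z`. -/
def Taken (r z x : ℕ) : Prop := EnumeratesBy r z.unpair.2 (2 ^ z.unpair.1 + x)

open Classical in
/-- The string `σ` is safe at the response `z`: the opponent misses at least three quarters of the
elements `σ` omits at scale `u`, a fraction `2⁻¹⁻ᵘ` of the block. -/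
def Safe (s : Bool) (r z u σ : ℕ) : Prop :=
  3 * 2 ^ z.unpair.1 ≤
    4 * 2 ^ (u + 1) * #{x ∈ range (2 ^ z.unpair.1) | ¬ Taken r z x ∧ Omits s z.unpair.1 u σ x}

/-- Some element enumerated in the response `z` is omitted both by `σ` at scale `u` and, on the
other side, by `τ` at scale `v`. -/
def Hit (s : Bool) (r z u σ v τ : ℕ) : Prop :=
  ∃ x < 2 ^ z.unpair.1, Taken r z x ∧ Omits s z.unpair.1 u σ x ∧ Omits (!s) z.unpair.1 v τ x

/-- No extension of the string `σ` of length `c` is safe at the response `z`. -/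
def NoSafeExt (s : Bool) (r z u c σ : ℕ) : Prop :=
  IsResponse r z ∧ c ≤ responseDepth z ∧
    ∀ σ' < 2 ^ responseDepth z, σ' % 2 ^ c = σ → ¬ Safe s r z u σ'

/-- Every extension of the string `σ` of length `c` is hit together with every extension of the
string `τ` of length `d`. -/
def AllExtHit (s : Bool) (r z u c σ v d τ : ℕ) : Prop :=
  IsResponse r z ∧ c ≤ responseDepth z ∧ ∀ σ' < 2 ^ responseDepth z, σ' % 2 ^ c = σ →
    ∀ τ' < 2 ^ responseDepth z, τ' % 2 ^ d = τ → Hit s r z u σ' v τ'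

/-- By stage `t` there is evidence from responses beyond `m`, using strings of length `a`, that the
length `c` is adequate for the string `σ` at scale `u`: the prefix of `σ` stays without safe
extensions even at scale `u + 1`, and against each `τ` of length `a` on the other side all
extensions get hit, unless safe extensions of `τ` are missing at responses up to `c` only. -/
def AdequateVia (s : Bool) (r u c σ a m t : ℕ) : Prop :=
  u + 1 ≤ a ∧ (∀ u' ≤ u + 1, ∃ z < t, m ≤ z ∧ NoSafeExt s r z u' a (σ % 2 ^ a)) ∧
    ∀ v ≤ a, ∀ τ < 2 ^ a, (∀ z < t, NoSafeExt (!s) r z v a τ → z ≤ c) ∨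
      ∃ z < t, m ≤ z ∧ AllExtHit s r z u c σ v a τ

/-- By stage `t` there is evidence from responses beyond `m` that the length `c` is adequate for the
string `σ` at scale `u`. -/
def Adequate (s : Bool) (r u c σ m t : ℕ) : Prop := ∃ a ≤ c, AdequateVia s r u c σ a m t

/-- Stage `t` brings new evidence of adequacy, being the first with evidence beyond some `m`.
Adequacy holds in the limit iff this happens infinitely often. -/
def FreshlyAdequate (s : Bool) (r u c σ t : ℕ) : Prop :=
  ∃ m < t, IsLeast {t' | Adequate s r u c σ m t'} t

/-- At stage `t` some length below `c` looks adequate on one of the two sides, which challenges `c`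
as the least adequate length. -/
def Challenged (s : Bool) (r c u σ v τ t : ℕ) : Prop :=
  ∃ c' < c, FreshlyAdequate s r u c' (σ % 2 ^ c') t ∨
    FreshlyAdequate (!s) r v c' (τ % 2 ^ c') t

/-- As far as stage `S` can tell, the strings `σ` and `τ` of length `c` choose the response `z`: it
is the least one hitting all their extensions that is not challenged afterwards. -/
def ChosenAt (s : Bool) (r c u σ v τ z S : ℕ) : Prop :=
  AllExtHit s r z u c σ v c τ ∧ (∀ t < S, z ≤ t → ¬ Challenged s r c u σ v τ t) ∧
    ∀ z' < z, AllExtHit s r z' u c σ v c τ → ∃ t < z, z' ≤ t ∧ Challenged s r c u σ v τ t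

/-- By stage `S` the elements of block `k` that `σ` omits at scale `u` for the opponent `r` are
released: the opponent has responded, and no prefix of `σ` chooses this response. -/
def ReleasedBy (s : Bool) (r k u σ S : ℕ) : Prop :=
  ∃ ρ < S, IsResponse r (Nat.pair k ρ) ∧ ∀ c ≤ depth k, u ≤ c → ∀ v ≤ c, ∀ τ < 2 ^ c,
    ¬ ChosenAt s r c u (σ % 2 ^ c) v τ (Nat.pair k ρ) S

/-- The functional of side `s` has enumerated the `x`-th element of block `k` by stage `S`, given
the initial segment `σ` of the oracle. -/
def FunctionalEnumeratesBy (s : Bool) (k σ x S : ℕ) : Prop :=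
  ∀ u ≤ depth k, Omits s k u σ x → ∀ r ≤ u, Active r k → ReleasedBy s r k u σ S

section PrimrecConstruction

variable {α : Type*} [Primcodable α] {r u v c d σ τ k x i l m t z a S : α → ℕ}

theorem primrec_depth (hk : Primrec k) : Primrec fun b => depth (k b) :=
  Primrec.nat_sub.comp (primrec_log (by norm_num) hk) (.const 1)

theorem primrec_responseDepth (hz : Primrec z) : Primrec fun b => responseDepth (z b) :=
  primrec_depth (Primrec.fst.comp (Primrec.unpair.comp hz))

theorem primrec_digitPos (s : Bool) (hl : Primrec l) (hσ : Primrec σ) (hi : Primrec i) :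
    Primrec fun b => digitPos s (l b) (σ b) (i b) := by
  unfold digitPos
  apply_rules (transparency := .reducible) [Primrec.nat_add.comp, Primrec.nat_mul.comp,
    Primrec.const]

theorem primrecPred_omits (s : Bool) (hk : Primrec k) (hu : Primrec u) (hσ : Primrec σ)
    (hx : Primrec x) : PrimrecPred fun b => Omits s (k b) (u b) (σ b) (x b) := by
  unfold Omits
  apply_rules (transparency := .reducible) (maxDepth := 1000) [primrecPred_forall_le,
    PrimrecPred.not, primrecPred_testBit, primrec_digitPos, primrec_depth, hk.comp, hu.comp,
    hσ.comp, hx.comp, Primrec.fst, Primrec.snd]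

theorem primrecPred_enumeratesBy (hr : Primrec r) (ht : Primrec t) (hx : Primrec x) :
    PrimrecPred fun b => EnumeratesBy (r b) (t b) (x b) :=
  have hcode : Primrec fun b => Denumerable.ofNat Nat.Partrec.Code (r b).unpair.1 :=
    (Primrec.ofNat _).comp (Primrec.fst.comp (Primrec.unpair.comp hr))
  Primrec.eq.comp (Nat.Partrec.Code.primrec_evaln.comp ((ht.pair hcode).pair hx)) (.const _)

theorem primrecPred_respondsBy (hr : Primrec r) (hk : Primrec k) (ht : Primrec t) :
    PrimrecPred fun b => RespondsBy (r b) (k b) (t b) := by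
  unfold RespondsBy
  apply_rules (transparency := .reducible) (maxDepth := 1000) [Primrec.nat_le.comp,
    Primrec.nat_add.comp, Primrec.nat_mul.comp, primrec_pow, primrec_card_filter_range,
    primrecPred_enumeratesBy, hr.comp, hk.comp, ht.comp, Primrec.fst, Primrec.snd, Primrec.const]

theorem primrecPred_respondsBelowBy (hr : Primrec r) (hm : Primrec m) (ht : Primrec t) :
    PrimrecPred fun b => RespondsBelowBy (r b) (m b) (t b) := by
  unfold RespondsBelowBy
  apply_rules (transparency := .reducible) (maxDepth := 1000) [primrecPred_forall_lt,
    primrecPred_imp, Primrec.nat_le.comp, primrecPred_respondsBy, hr.comp, hm.comp, ht.comp,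
    Primrec.unpair.comp, Primrec.fst, Primrec.snd, Primrec.fst.comp, Primrec.snd.comp,
    primrec_fun_id]

theorem primrecPred_active (hr : Primrec r) (hk : Primrec k) :
    PrimrecPred fun b => Active (r b) (k b) := by
  unfold Active
  apply_rules (transparency := .reducible) (maxDepth := 1000) [primrecPred_exists_le,
    primrecPred_isLeast, PrimrecPred.and, Primrec.nat_le.comp, primrecPred_respondsBelowBy, hr.comp,
    hk.comp, Primrec.unpair.comp, Primrec.fst, Primrec.snd, Primrec.fst.comp, Primrec.snd.comp,
    primrec_fun_id, Primrec.const]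

theorem primrecPred_isResponse (hr : Primrec r) (hz : Primrec z) :
    PrimrecPred fun b => IsResponse (r b) (z b) := by
  unfold IsResponse
  apply_rules (transparency := .reducible) (maxDepth := 1000) [PrimrecPred.and, primrecPred_isLeast,
    primrecPred_active, primrecPred_respondsBy, hr.comp, hz.comp, Primrec.unpair.comp, Primrec.fst,
    Primrec.snd, Primrec.fst.comp, Primrec.snd.comp, primrec_fun_id]

theorem primrecPred_taken (hr : Primrec r) (hz : Primrec z) (hx : Primrec x) :
    PrimrecPred fun b => Taken (r b) (z b) (x b) := by
  unfold Taken
  apply_rules (transparency := .reducible) (maxDepth := 1000) [primrecPred_enumeratesBy,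
    Primrec.nat_add.comp, primrec_pow, hr.comp, hz.comp, hx.comp, Primrec.unpair.comp, Primrec.fst,
    Primrec.snd, Primrec.fst.comp, Primrec.snd.comp, primrec_fun_id, Primrec.const]

theorem primrecPred_safe (s : Bool) (hr : Primrec r) (hz : Primrec z) (hu : Primrec u)
    (hσ : Primrec σ) :
    PrimrecPred fun b => Safe s (r b) (z b) (u b) (σ b) := by
  unfold Safe
  apply_rules (transparency := .reducible) (maxDepth := 1000) [Primrec.nat_le.comp,
    Primrec.nat_mul.comp, Primrec.nat_add.comp, primrec_pow, primrec_card_filter_range,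
    PrimrecPred.and, PrimrecPred.not, primrecPred_taken, primrecPred_omits, hr.comp, hz.comp,
    hu.comp, hσ.comp, Primrec.unpair.comp, Primrec.fst, Primrec.snd, Primrec.fst.comp,
    Primrec.snd.comp, primrec_fun_id, Primrec.const]

theorem primrecPred_hit (s : Bool) (hr : Primrec r) (hz : Primrec z) (hu : Primrec u)
    (hσ : Primrec σ) (hv : Primrec v) (hτ : Primrec τ) :
    PrimrecPred fun b => Hit s (r b) (z b) (u b) (σ b) (v b) (τ b) := by
  unfold Hit
  apply_rules (transparency := .reducible) (maxDepth := 1000) [primrecPred_exists_lt,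
    PrimrecPred.and, primrec_pow, primrecPred_taken, primrecPred_omits, hr.comp, hz.comp, hu.comp,
    hσ.comp, hv.comp, hτ.comp, Primrec.unpair.comp, Primrec.fst, Primrec.snd, Primrec.fst.comp,
    Primrec.snd.comp, primrec_fun_id, Primrec.const]

theorem primrecPred_noSafeExt (s : Bool) (hr : Primrec r) (hz : Primrec z) (hu : Primrec u)
    (hc : Primrec c) (hσ : Primrec σ) :
    PrimrecPred fun b => NoSafeExt s (r b) (z b) (u b) (c b) (σ b) := by
  unfold NoSafeExt
  apply_rules (transparency := .reducible) (maxDepth := 1000) [primrecPred_forall_lt,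
    PrimrecPred.and, PrimrecPred.not, primrecPred_imp, Primrec.nat_le.comp, Primrec.eq.comp,
    Primrec.nat_mod.comp, primrec_pow, primrec_responseDepth, primrecPred_isResponse,
    primrecPred_safe, hr.comp, hz.comp, hu.comp, hc.comp, hσ.comp, Primrec.fst, Primrec.snd,
    Primrec.fst.comp, Primrec.snd.comp, primrec_fun_id, Primrec.const]

theorem primrecPred_allExtHit (s : Bool) (hr : Primrec r) (hz : Primrec z) (hu : Primrec u)
    (hc : Primrec c) (hσ : Primrec σ) (hv : Primrec v) (hd : Primrec d) (hτ : Primrec τ) :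
    PrimrecPred fun b => AllExtHit s (r b) (z b) (u b) (c b) (σ b) (v b) (d b) (τ b) := by
  unfold AllExtHit
  apply_rules (transparency := .reducible) (maxDepth := 1000) [primrecPred_forall_lt,
    PrimrecPred.and, primrecPred_imp, Primrec.nat_le.comp, Primrec.eq.comp, Primrec.nat_mod.comp,
    primrec_pow, primrec_responseDepth, primrecPred_isResponse, primrecPred_hit, hr.comp, hz.comp,
    hu.comp, hc.comp, hσ.comp, hv.comp, hd.comp, hτ.comp, Primrec.fst, Primrec.snd,
    Primrec.fst.comp, Primrec.snd.comp, primrec_fun_id, Primrec.const]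

theorem primrecPred_adequateVia (s : Bool) (hr : Primrec r) (hu : Primrec u) (hc : Primrec c)
    (hσ : Primrec σ) (ha : Primrec a) (hm : Primrec m) (ht : Primrec t) :
    PrimrecPred fun b => AdequateVia s (r b) (u b) (c b) (σ b) (a b) (m b) (t b) := by
  unfold AdequateVia
  apply_rules (transparency := .reducible) (maxDepth := 1000) [primrecPred_forall_lt,
    primrecPred_forall_le, primrecPred_exists_lt, PrimrecPred.and, PrimrecPred.or, primrecPred_imp,
    Primrec.nat_le.comp, Primrec.nat_add.comp, Primrec.nat_mod.comp, primrec_pow,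
    primrecPred_noSafeExt, primrecPred_allExtHit, hr.comp, hu.comp, hc.comp, hσ.comp, ha.comp,
    hm.comp, ht.comp, Primrec.fst, Primrec.snd, Primrec.fst.comp, Primrec.snd.comp, primrec_fun_id,
    Primrec.const]

theorem primrecPred_adequate (s : Bool) (hr : Primrec r) (hu : Primrec u) (hc : Primrec c)
    (hσ : Primrec σ) (hm : Primrec m) (ht : Primrec t) :
    PrimrecPred fun b => Adequate s (r b) (u b) (c b) (σ b) (m b) (t b) := by
  unfold Adequate
  apply_rules (transparency := .reducible) (maxDepth := 1000) [primrecPred_exists_le,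
    primrecPred_adequateVia, hr.comp, hu.comp, hc.comp, hσ.comp, hm.comp, ht.comp, Primrec.fst,
    Primrec.snd, Primrec.fst.comp, Primrec.snd.comp, primrec_fun_id]

theorem primrecPred_freshlyAdequate (s : Bool) (hr : Primrec r) (hu : Primrec u) (hc : Primrec c)
    (hσ : Primrec σ) (ht : Primrec t) :
    PrimrecPred fun b => FreshlyAdequate s (r b) (u b) (c b) (σ b) (t b) := by
  unfold FreshlyAdequate
  apply_rules (transparency := .reducible) (maxDepth := 1000) [primrecPred_exists_lt,
    PrimrecPred.and, primrecPred_isLeast, primrecPred_adequate, hr.comp, hu.comp, hc.comp, hσ.comp,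
    ht.comp, Primrec.fst, Primrec.snd, Primrec.fst.comp, Primrec.snd.comp, primrec_fun_id]

theorem primrecPred_challenged (s : Bool) (hr : Primrec r) (hc : Primrec c) (hu : Primrec u)
    (hσ : Primrec σ) (hv : Primrec v) (hτ : Primrec τ) (ht : Primrec t) :
    PrimrecPred fun b => Challenged s (r b) (c b) (u b) (σ b) (v b) (τ b) (t b) := by
  unfold Challenged
  apply_rules (transparency := .reducible) (maxDepth := 1000) [primrecPred_exists_lt,
    PrimrecPred.or, Primrec.nat_mod.comp, primrec_pow, primrecPred_freshlyAdequate, hr.comp,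
    hc.comp, hu.comp, hσ.comp, hv.comp, hτ.comp, ht.comp, Primrec.fst, Primrec.snd,
    Primrec.fst.comp, Primrec.snd.comp, primrec_fun_id, Primrec.const]

theorem primrecPred_chosenAt (s : Bool) (hr : Primrec r) (hc : Primrec c) (hu : Primrec u)
    (hσ : Primrec σ) (hv : Primrec v) (hτ : Primrec τ) (hz : Primrec z) (hS : Primrec S) :
    PrimrecPred fun b => ChosenAt s (r b) (c b) (u b) (σ b) (v b) (τ b) (z b) (S b) := by
  unfold ChosenAt
  apply_rules (transparency := .reducible) (maxDepth := 1000) [primrecPred_forall_lt,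
    primrecPred_exists_lt, PrimrecPred.and, PrimrecPred.not, primrecPred_imp, Primrec.nat_le.comp,
    primrecPred_allExtHit, primrecPred_challenged, hr.comp, hc.comp, hu.comp, hσ.comp, hv.comp,
    hτ.comp, hz.comp, hS.comp, Primrec.fst, Primrec.snd, Primrec.fst.comp, Primrec.snd.comp,
    primrec_fun_id]

theorem primrecPred_releasedBy (s : Bool) (hr : Primrec r) (hk : Primrec k) (hu : Primrec u)
    (hσ : Primrec σ) (hS : Primrec S) :
    PrimrecPred fun b => ReleasedBy s (r b) (k b) (u b) (σ b) (S b) := by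
  unfold ReleasedBy
  apply_rules (transparency := .reducible) (maxDepth := 1000) [primrecPred_forall_lt,
    primrecPred_forall_le, primrecPred_exists_lt, PrimrecPred.and, PrimrecPred.not, primrecPred_imp,
    Primrec.nat_le.comp, Primrec.nat_mod.comp, primrec_pow, Primrec₂.natPair.comp, primrec_depth,
    primrecPred_isResponse, primrecPred_chosenAt, hr.comp, hk.comp, hu.comp, hσ.comp, hS.comp,
    Primrec.fst, Primrec.snd, Primrec.fst.comp, Primrec.snd.comp, primrec_fun_id, Primrec.const]

theorem primrecPred_functionalEnumeratesBy (s : Bool) (hk : Primrec k) (hσ : Primrec σ)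
    (hx : Primrec x) (hS : Primrec S) :
    PrimrecPred fun b => FunctionalEnumeratesBy s (k b) (σ b) (x b) (S b) := by
  unfold FunctionalEnumeratesBy
  apply_rules (transparency := .reducible) (maxDepth := 1000) [primrecPred_forall_le,
    primrecPred_imp, primrec_depth, primrecPred_omits, primrecPred_active, primrecPred_releasedBy,
    hk.comp, hσ.comp, hx.comp, hS.comp, Primrec.fst, Primrec.snd, Primrec.fst.comp,
    Primrec.snd.comp, primrec_fun_id]

end PrimrecConstruction

/-! ### Counting strings -/

section Counting

variable {s s' : Bool} {r k l u u' v σ σ' τ i i' z : ℕ}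

theorem four_pow_depth_le (hk : 4 ≤ k) : 4 ^ (depth k + 1) ≤ k := by
  rw [depth, Nat.sub_add_cancel (Nat.log_pos (by norm_num) hk)]
  exact Nat.pow_log_le_self 4 (by omega)

theorem le_depth_of_four_pow_le (h : 4 ^ (l + 1) ≤ k) : l ≤ depth k :=
  Nat.le_sub_one_of_lt (Nat.le_log_of_pow_le (by norm_num) h)

theorem digitPos_lt (hk : 4 ≤ k) (hσ : σ < 2 ^ depth k) (hi : i ≤ depth k) :
    digitPos s (depth k) σ i < k := by
  have hl : depth k + 1 ≤ 2 ^ depth k := Nat.lt_two_pow_self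
  have hmul : (σ + 1) * (depth k + 1) ≤ 2 ^ depth k * 2 ^ depth k := Nat.mul_le_mul hσ hl
  have hpow : 4 ^ (depth k + 1) = 4 * (2 ^ depth k * 2 ^ depth k) := by
    rw [pow_succ, ← mul_pow]
    norm_num [mul_comm]
  have hle := four_pow_depth_le hk
  have hs := s.toNat_le
  unfold digitPos
  linarith

theorem digitPos_inj (hi : i ≤ l) (hi' : i' ≤ l) :
    digitPos s l σ i = digitPos s' l σ' i' ↔ s = s' ∧ σ = σ' ∧ i = i' := by
  refine ⟨fun h => ?_, by rintro ⟨rfl, rfl, rfl⟩; rfl⟩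
  have hs : s.toNat = s'.toNat := by
    have := s.toNat_lt
    have := s'.toNat_lt
    unfold digitPos at h
    omega
  have hσ : i + (l + 1) * σ = i' + (l + 1) * σ' := by
    unfold digitPos at h
    linarith
  have hunique := (Nat.div_mod_unique (a := i + (l + 1) * σ) (d := σ) (c := i) l.succ_pos).2
    ⟨rfl, Nat.lt_succ_of_le hi⟩
  have hunique' := (Nat.div_mod_unique (d := σ') l.succ_pos).2 ⟨hσ.symm, Nat.lt_succ_of_le hi'⟩
  exact ⟨by cases s <;> cases s' <;> simp_all, hunique.1.symm.trans hunique'.1,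
    hunique.2.symm.trans hunique'.2⟩

/-- The positions of the digits that the string `σ` of side `s` inspects on block `k` at
scale `u`. -/
def ownedDigits (s : Bool) (k u σ : ℕ) : Finset ℕ :=
  (range (u + 1)).image (digitPos s (depth k) σ)

theorem ownedDigits_subset_range (hk : 4 ≤ k) (hσ : σ < 2 ^ depth k) (hu : u ≤ depth k) :
    ownedDigits s k u σ ⊆ range k :=
  image_subset_iff.2 fun _ hi =>
    mem_range.2 (digitPos_lt hk hσ ((mem_range_succ_iff.1 hi).trans hu))

theorem card_ownedDigits (hu : u ≤ depth k) : #(ownedDigits s k u σ) = u + 1 := by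
  rw [ownedDigits, card_image_of_injOn, card_range]
  intro i hi j hj h
  rw [coe_range, Set.mem_Iio, Nat.lt_succ_iff] at hi hj
  exact ((digitPos_inj (hi.trans hu) (hj.trans hu)).1 h).2.2

theorem disjoint_ownedDigits (hu : u ≤ depth k) (hu' : u' ≤ depth k) (h : s ≠ s' ∨ σ ≠ σ') :
    Disjoint (ownedDigits s k u σ) (ownedDigits s' k u' σ') := by
  simp only [disjoint_left, ownedDigits, mem_image, mem_range_succ_iff]
  rintro _ ⟨i, hi, rfl⟩ ⟨i', hi', hii'⟩
  obtain ⟨hs, hσ, -⟩ := (digitPos_inj (hi'.trans hu') (hi.trans hu)).1 hii'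
  exact h.elim (· hs.symm) (· hσ.symm)

theorem mem_zeroDigits_ownedDigits {x : ℕ} :
    x ∈ zeroDigits k (ownedDigits s k u σ) ↔ x < 2 ^ k ∧ Omits s k u σ x := by
  simp [zeroDigits, ownedDigits, Omits]

theorem two_pow_mul_card_zeroDigits_ownedDigits (hk : 4 ≤ k) (hσ : σ < 2 ^ depth k)
    (hu : u ≤ depth k) : 2 ^ (u + 1) * #(zeroDigits k (ownedDigits s k u σ)) = 2 ^ k := by
  have hD := ownedDigits_subset_range (s := s) hk hσ hu
  have hle : u + 1 ≤ k := by simpa [card_ownedDigits hu] using card_le_card hD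
  rw [card_zeroDigits hD, card_ownedDigits hu, ← pow_add, Nat.add_sub_of_le hle]

open Classical in
/-- The positions within their block of the elements missed by the opponent in the response `z`. -/
noncomputable def missed (r z : ℕ) : Finset ℕ := {x ∈ range (2 ^ z.unpair.1) | ¬ Taken r z x}

theorem IsResponse.four_le (hz : IsResponse r z) : 4 ≤ z.unpair.1 := hz.1.1

theorem IsResponse.card_missed_le (hz : IsResponse r z) :
    (#(missed r z) : ℝ) ≤ 1 / 2 * #(zeroDigits z.unpair.1 ∅) := by
  classical
  have htaken : 2 ^ z.unpair.1 ≤ 2 * #{x ∈ range (2 ^ z.unpair.1) | Taken r z x} := hz.2.1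
  have hadd : #{x ∈ range (2 ^ z.unpair.1) | Taken r z x} + #(missed r z) = 2 ^ z.unpair.1 :=
    (card_filter_add_card_filter_not _).trans (card_range _)
  have hle : 2 * #(missed r z) ≤ 2 ^ z.unpair.1 := by omega
  have hle' : (2 * #(missed r z) : ℝ) ≤ 2 ^ z.unpair.1 := mod_cast hle
  rw [cast_card_zeroDigits (empty_subset _), card_empty, pow_zero, one_mul]
  linarith

theorem safe_iff (hk : 4 ≤ z.unpair.1) (hσ : σ < 2 ^ responseDepth z) (hu : u ≤ responseDepth z) :
    Safe s r z u σ ↔ 3 * #(zeroDigits z.unpair.1 (ownedDigits s z.unpair.1 u σ)) ≤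
      4 * #(zeroDigits z.unpair.1 (ownedDigits s z.unpair.1 u σ) ∩ missed r z) := by
  classical
  set D := ownedDigits s z.unpair.1 u σ
  have hmissed : {x ∈ range (2 ^ z.unpair.1) | ¬ Taken r z x ∧ Omits s z.unpair.1 u σ x} =
      zeroDigits z.unpair.1 D ∩ missed r z := by
    ext x
    simp only [D, missed, mem_inter, mem_zeroDigits_ownedDigits, mem_filter, mem_range]
    tauto
  rw [Safe, hmissed, ← two_pow_mul_card_zeroDigits_ownedDigits hk hσ hu, mul_left_comm,
    mul_comm 4, mul_assoc, Nat.mul_le_mul_left_iff (by positivity)]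

theorem zeroDigits_subset_missed_of_not_hit (h : ¬ Hit s r z u σ v τ) :
    zeroDigits z.unpair.1 (ownedDigits s z.unpair.1 u σ ∪ ownedDigits (!s) z.unpair.1 v τ) ⊆
      missed r z := by
  classical
  intro x hx
  rw [← zeroDigits_inter, mem_inter, mem_zeroDigits_ownedDigits, mem_zeroDigits_ownedDigits] at hx
  exact mem_filter.2 ⟨mem_range.2 hx.1.1, fun ht => h ⟨x, hx.1.1, ht, hx.1.2, hx.2.2⟩⟩

open Classical in
theorem card_safe_le (hz : IsResponse r z) (hu : u ≤ responseDepth z) :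
    #{σ ∈ range (2 ^ responseDepth z) | Safe s r z u σ} ≤ 8 * 2 ^ (u + 1) := by
  set I := {σ ∈ range (2 ^ responseDepth z) | Safe s r z u σ}
  have hlt : ∀ σ ∈ I, σ < 2 ^ responseDepth z := fun σ hσ => mem_range.1 (mem_filter.1 hσ).1
  have h := card_mul_le_of_pairwiseDisjoint_digits (θ := 3 / 4) (by norm_num) (empty_subset _)
    (fun σ hσ => ownedDigits_subset_range (s := s) hz.four_le (hlt σ hσ) hu)
    (fun σ _ => card_ownedDigits hu) (fun σ _ => disjoint_empty_left _)
    (fun σ _ τ _ h => disjoint_ownedDigits hu hu (.inr h)) hz.card_missed_le fun σ hσ => by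
      have hsafe := (safe_iff hz.four_le (hlt σ hσ) hu).1 (mem_filter.1 hσ).2
      rw [empty_union, div_mul_eq_mul_div, div_le_iff₀' (by norm_num)]
      exact_mod_cast hsafe
  have hcard : (#I : ℝ) ≤ 8 * 2 ^ (u + 1) := by linarith
  exact_mod_cast hcard

open Classical in
theorem card_not_hit_le (hz : IsResponse r z) (hu : u ≤ responseDepth z) (hv : v ≤ responseDepth z)
    (hτ : τ < 2 ^ responseDepth z) (hsafe : ¬ Safe (!s) r z v τ) :
    #{σ ∈ range (2 ^ responseDepth z) | ¬ Hit s r z u σ v τ} ≤ 3 * 2 ^ (u + 1) := by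
  set I := {σ ∈ range (2 ^ responseDepth z) | ¬ Hit s r z u σ v τ}
  have hlt : ∀ σ ∈ I, σ < 2 ^ responseDepth z := fun σ hσ => mem_range.1 (mem_filter.1 hσ).1
  have hF : (#(zeroDigits z.unpair.1 (ownedDigits (!s) z.unpair.1 v τ) ∩ missed r z) : ℝ) ≤
      3 / 4 * #(zeroDigits z.unpair.1 (ownedDigits (!s) z.unpair.1 v τ)) := by
    rw [safe_iff hz.four_le hτ hv, not_le] at hsafe
    rw [div_mul_eq_mul_div, le_div_iff₀' (by norm_num)]
    exact_mod_cast hsafe.le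
  have h := card_mul_le_of_pairwiseDisjoint_digits zero_le_one
    (ownedDigits_subset_range hz.four_le hτ hv)
    (fun σ hσ => ownedDigits_subset_range (s := s) hz.four_le (hlt σ hσ) hu)
    (fun σ _ => card_ownedDigits hu) (fun σ _ => disjoint_ownedDigits hv hu (.inl s.not_ne_self))
    (fun σ _ τ _ h => disjoint_ownedDigits hu hu (.inr h)) hF fun σ hσ => by
      have hmissed := zeroDigits_subset_missed_of_not_hit (mem_filter.1 hσ).2
      rw [union_comm] at hmissed
      rw [one_mul, inter_eq_left.2 (subset_inter _ hmissed)]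
      rw [← zeroDigits_inter]
      exact inter_subset_left
  have hcard : (#I : ℝ) ≤ 3 * 2 ^ (u + 1) := by linarith
  exact_mod_cast hcard

theorem card_matching_not_hit_le (hz : IsResponse r z) (hu : u ≤ responseDepth z)
    (hv : v ≤ responseDepth z) {M : Finset ℕ} {f : ℕ → ℕ} (hM : ∀ σ ∈ M, σ < 2 ^ responseDepth z)
    (hf : Set.InjOn f M) (hfM : ∀ σ ∈ M, f σ < 2 ^ responseDepth z)
    (hhit : ∀ σ ∈ M, ¬ Hit s r z u σ v (f σ)) : #M ≤ 2 ^ (u + v + 2) := by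
  have hdisj : ∀ σ τ, Disjoint (ownedDigits s z.unpair.1 u σ) (ownedDigits (!s) z.unpair.1 v τ) :=
    fun σ τ => disjoint_ownedDigits hu hv (.inl s.not_ne_self.symm)
  have h := card_mul_le_of_pairwiseDisjoint_digits (n := u + v + 2) (I := M)
    (Q := fun σ => ownedDigits s z.unpair.1 u σ ∪ ownedDigits (!s) z.unpair.1 v (f σ)) zero_le_one
    (empty_subset _) (fun σ hσ => union_subset (ownedDigits_subset_range hz.four_le (hM σ hσ) hu)
      (ownedDigits_subset_range hz.four_le (hfM σ hσ) hv))
    (fun σ _ => by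
      rw [card_union_of_disjoint (hdisj _ _), card_ownedDigits hu, card_ownedDigits hv]
      ring)
    (fun σ _ => disjoint_empty_left _)
    (fun σ hσ τ hτ h => disjoint_union_left.2
      ⟨disjoint_union_right.2 ⟨disjoint_ownedDigits hu hu (.inr h), hdisj _ _⟩,
        disjoint_union_right.2 ⟨(hdisj _ _).symm,
          disjoint_ownedDigits hv hv (.inr fun h' => h (hf hσ hτ h'))⟩⟩)
    hz.card_missed_le fun σ hσ => by
      rw [one_mul, empty_union,
        inter_eq_left.2 (zeroDigits_subset_missed_of_not_hit (hhit σ hσ))]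
  have hcard : (#M : ℝ) ≤ 2 ^ (u + v + 2) := by linarith
  exact_mod_cast hcard

open Classical in
theorem card_exists_not_hit_le {d : ℕ} (hu : u ≤ responseDepth z) (hv : v ≤ responseDepth z)
    (h : NoSafeExt (!s) r z v d τ) :
    #{σ ∈ range (2 ^ responseDepth z) |
      ∃ τ' < 2 ^ responseDepth z, τ' % 2 ^ d = τ ∧ ¬ Hit s r z u σ v τ'} ≤
      3 * 2 ^ (u + 1) * 2 ^ (u + v + 2) := by
  obtain ⟨hz, -, hsafe⟩ := h
  refine card_le_mul_of_matching_le (R := fun σ τ' => τ' < 2 ^ responseDepth z ∧ τ' % 2 ^ d = τ ∧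
    ¬ Hit s r z u σ v τ') (fun σ hσ => (mem_filter.1 hσ).2) (fun τ' => ?_)
    fun M hM f hf hfM => card_matching_not_hit_le hz hu hv
      (fun σ hσ => mem_range.1 (mem_filter.1 (hM hσ)).1) hf (fun σ hσ => (hfM σ hσ).1)
      fun σ hσ => (hfM σ hσ).2.2
  by_cases hτ' : τ' < 2 ^ responseDepth z ∧ τ' % 2 ^ d = τ
  · refine (card_le_card fun σ hσ => ?_).trans
      (card_not_hit_le hz hu hv hτ'.1 (hsafe τ' hτ'.1 hτ'.2))
    obtain ⟨hσ, -, -, hhit⟩ := mem_filter.1 hσ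
    exact mem_filter.2 ⟨(mem_filter.1 hσ).1, hhit⟩
  · rw [filter_false_of_mem fun σ _ h => hτ' ⟨h.1, h.2.1⟩]
    simp

end Counting

/-! ### Adequate lengths -/

section AdequateLength

variable {s : Bool} {r u v c c' d d' σ τ z z' : ℕ} {X : Set ℕ}

theorem IsResponse.ext (hz : IsResponse r z) (hz' : IsResponse r z')
    (h : z.unpair.1 = z'.unpair.1) : z = z' := by
  rw [← Nat.pair_unpair z, ← Nat.pair_unpair z', h, hz.2.unique (h ▸ hz'.2)]

theorem eventually_le_responseDepth (r l : ℕ) :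
    ∀ᶠ z in atTop, IsResponse r z → l ≤ responseDepth z := by
  have hfin : {z | IsResponse r z ∧ z.unpair.1 < 4 ^ (l + 1)}.Finite :=
    .of_injOn (t := Set.Iio (4 ^ (l + 1))) (fun z hz => hz.2) (fun z hz z' hz' => hz.1.ext hz'.1)
      (Set.finite_Iio _)
  filter_upwards [Nat.cofinite_eq_atTop ▸ hfin.eventually_cofinite_notMem] with z hz hr
  exact le_depth_of_four_pow_le (not_lt.1 fun hlt => hz ⟨hr, hlt⟩)

theorem NoSafeExt.mono (h : NoSafeExt s r z u c (initSeg X c)) (hc : c ≤ c')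
    (hz : c' ≤ responseDepth z) : NoSafeExt s r z u c' (initSeg X c') :=
  ⟨h.1, hz, fun σ hσ hσX => h.2.2 σ hσ <| by
    rw [← mod_two_pow_mod_of_le σ hc, hσX, initSeg_mod X hc]⟩

theorem AllExtHit.mono_left (h : AllExtHit s r z u c (initSeg X c) v d τ) (hc : c ≤ c')
    (hz : c' ≤ responseDepth z) : AllExtHit s r z u c' (initSeg X c') v d τ :=
  ⟨h.1, hz, fun σ hσ hσX => h.2.2 σ hσ <| by
    rw [← mod_two_pow_mod_of_le σ hc, hσX, initSeg_mod X hc]⟩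

theorem AllExtHit.mono_right (h : AllExtHit s r z u c σ v d (initSeg X d)) (hd : d ≤ d') :
    AllExtHit s r z u c σ v d' (initSeg X d') :=
  ⟨h.1, h.2.1, fun σ' hσ' hσ τ hτ hτX => h.2.2 σ' hσ' hσ τ hτ
    (by rw [← mod_two_pow_mod_of_le τ hd, hτX, initSeg_mod X hd])⟩

theorem Hit.swap (h : Hit s r z u σ v τ) : Hit (!s) r z v τ u σ := by
  obtain ⟨x, hx, ht, hσ, hτ⟩ := h
  exact ⟨x, hx, ht, hτ, s.not_not.symm ▸ hσ⟩

theorem AllExtHit.swap (h : AllExtHit s r z u c σ v c τ) : AllExtHit (!s) r z v c τ u c σ :=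
  ⟨h.1, h.2.1, fun τ' hτ' hτ σ' hσ' hσ => (h.2.2 σ' hσ' hσ τ' hτ' hτ).swap⟩

theorem eventually_frequently_noSafeExt (s : Bool) (hX : ¬ Delta2 X)
    (hr : ∃ᶠ z in atTop, IsResponse r z) (u : ℕ) :
    ∀ᶠ c in atTop, ∃ᶠ z in atTop, NoSafeExt s r z u c (initSeg X c) := by
  obtain ⟨c, hc⟩ := exists_frequently_forall_not_of_not_delta2 hX
    (Z := fun z => IsResponse r z ∧ u ≤ responseDepth z) (Q := fun z σ => Safe s r z u σ)
    ((primrecPred_isResponse (.const r) .id).and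
      (Primrec.nat_le.comp (.const u) (primrec_responseDepth .id)))
    (primrecPred_safe s (.const r) .fst (.const u) .snd) (primrec_responseDepth .id)
    ((hr.and_eventually (eventually_le_responseDepth r u)).mono fun z hz => ⟨hz.1, hz.2 hz.1⟩)
    fun z hz => card_safe_le hz.1 hz.2
  filter_upwards [eventually_ge_atTop c] with c' hc'
  refine (hc.and_eventually (eventually_le_responseDepth r c')).mono fun z ⟨⟨hz, hsafe⟩, hl⟩ => ?_
  exact NoSafeExt.mono ⟨hz.1, hc'.trans (hl hz.1), hsafe⟩ hc' (hl hz.1)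

theorem eventually_frequently_allExtHit (hX : ¬ Delta2 X) (u : ℕ)
    (h : ∃ᶠ z in atTop, NoSafeExt (!s) r z v d τ) :
    ∀ᶠ c in atTop, ∃ᶠ z in atTop, AllExtHit s r z u c (initSeg X c) v d τ := by
  obtain ⟨c, hc⟩ := exists_frequently_forall_not_of_not_delta2 hX
    (Z := fun z => NoSafeExt (!s) r z v d τ ∧ u ≤ responseDepth z ∧ v ≤ responseDepth z)
    (Q := fun z σ => ∃ τ' < 2 ^ responseDepth z, τ' % 2 ^ d = τ ∧ ¬ Hit s r z u σ v τ')
    ((primrecPred_noSafeExt _ (.const r) .id (.const v) (.const d) (.const τ)).and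
      ((Primrec.nat_le.comp (.const u) (primrec_responseDepth .id)).and
        (Primrec.nat_le.comp (.const v) (primrec_responseDepth .id))))
    (primrecPred_exists_lt (primrec_pow (.const 2) (primrec_responseDepth .fst))
      ((Primrec.eq.comp (Primrec.nat_mod.comp .snd (.const _)) (.const τ)).and
        (primrecPred_hit s (.const r) (Primrec.fst.comp .fst) (.const u) (Primrec.snd.comp .fst)
          (.const v) .snd).not)) (primrec_responseDepth primrec_fun_id)
    ((h.and_eventually ((eventually_le_responseDepth r u).and
      (eventually_le_responseDepth r v))).mono fun z hz => ⟨hz.1, hz.2.1 hz.1.1, hz.2.2 hz.1.1⟩)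
    fun z hz => by convert card_exists_not_hit_le hz.2.1 hz.2.2 hz.1
  filter_upwards [eventually_ge_atTop c] with c' hc'
  refine (hc.and_eventually (eventually_le_responseDepth r c')).mono fun z ⟨⟨hz, hhit⟩, hl⟩ => ?_
  simp only [not_exists, not_and, not_not] at hhit
  exact AllExtHit.mono_left ⟨hz.1.1, hc'.trans (hl hz.1.1), hhit⟩ hc' (hl hz.1.1)

/-- At length `a` the string `initSeg X a` has no safe extensions at infinitely many responses, at
every scale up to `u`. -/
def Risky (s : Bool) (r : ℕ) (X : Set ℕ) (u a : ℕ) : Prop :=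
  u ≤ a ∧ ∀ u' ≤ u, ∃ᶠ z in atTop, NoSafeExt s r z u' a (initSeg X a)

theorem exists_risky (s : Bool) (hX : ¬ Delta2 X) (hr : ∃ᶠ z in atTop, IsResponse r z) (u : ℕ) :
    ∃ a, Risky s r X u a :=
  ((eventually_ge_atTop u).and ((eventually_all_finite (Set.finite_Iic u)).2
    fun u' _ => eventually_frequently_noSafeExt s hX hr u')).exists

theorem exists_forall_frequently_allExtHit (s : Bool) (hX : ¬ Delta2 X) (r u a : ℕ) :
    ∃ c, a ≤ c ∧ ∀ v ≤ a, ∀ τ < 2 ^ a, (∀ z, NoSafeExt (!s) r z v a τ → z ≤ c) ∨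
      ∃ᶠ z in atTop, AllExtHit s r z u c (initSeg X c) v a τ := by
  refine ((eventually_ge_atTop a).and ((eventually_all_finite (Set.finite_Iic a)).2 fun v _ =>
    (eventually_all_finite (Set.finite_Iio (2 ^ a))).2 fun τ _ => ?_)).exists
  by_cases h : ∃ᶠ z in atTop, NoSafeExt (!s) r z v a τ
  · filter_upwards [eventually_frequently_allExtHit hX u h] with c hc using .inr hc
  · obtain ⟨b, hb⟩ := eventually_atTop.1 (not_frequently.1 h)
    filter_upwards [eventually_ge_atTop b] with c hc
    exact .inl fun z hz => not_lt.1 fun hlt => hb z (hc.trans hlt.le) hz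

theorem eventually_exists_lt_of_frequently {P : ℕ → Prop} (h : ∃ᶠ z in atTop, P z) (m : ℕ) :
    ∀ᶠ t in atTop, ∃ z < t, m ≤ z ∧ P z := by
  obtain ⟨z, hz, hPz⟩ := frequently_atTop.1 h m
  filter_upwards [eventually_gt_atTop z] with t ht using ⟨z, ht, hz, hPz⟩

/-- In the limit the length `c` is adequate for the string `σ` at scale `u`: there is evidence from
responses beyond every bound. -/
def IsAdequate (s : Bool) (r u c σ : ℕ) : Prop := ∀ m, ∃ t, Adequate s r u c σ m t

theorem exists_isAdequate (s : Bool) (hX : ¬ Delta2 X)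
    (hr : ∃ᶠ z in atTop, IsResponse r z) (u : ℕ) :
    ∃ c, IsAdequate s r u c (initSeg X c) := by
  obtain ⟨a, hua, hsafe⟩ := exists_risky s hX hr (u + 1)
  obtain ⟨c, hac, hhit⟩ := exists_forall_frequently_allExtHit s hX r u a
  refine ⟨c, fun m => ?_⟩
  have hsafe' : ∀ᶠ t in atTop, ∀ u' ≤ u + 1, ∃ z < t, m ≤ z ∧
      NoSafeExt s r z u' a (initSeg X c % 2 ^ a) :=
    (eventually_all_finite (Set.finite_Iic (u + 1))).2 fun u' hu' =>
      eventually_exists_lt_of_frequently (initSeg_mod X hac ▸ hsafe u' hu') m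
  have hhit' : ∀ᶠ t in atTop, ∀ v ≤ a, ∀ τ < 2 ^ a, (∀ z < t, NoSafeExt (!s) r z v a τ → z ≤ c) ∨
      ∃ z < t, m ≤ z ∧ AllExtHit s r z u c (initSeg X c) v a τ := by
    refine (eventually_all_finite (Set.finite_Iic a)).2 fun v hv =>
      (eventually_all_finite (Set.finite_Iio (2 ^ a))).2 fun τ hτ => ?_
    rcases hhit v hv τ hτ with h | h
    · exact .of_forall fun t => .inl fun z _ => h z
    · exact (eventually_exists_lt_of_frequently h m).mono fun t => .inr
  obtain ⟨t, ht⟩ := (hsafe'.and hhit').exists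
  exact ⟨t, a, hac, hua, ht⟩

end AdequateLength

/-! ### Chosen responses -/

section Chosen

variable {s : Bool} {r u v c σ τ k z m m' t a S S' : ℕ} {X : Set ℕ}

theorem eventually_forall_not_isLeast (P : ℕ → ℕ → Prop) (n : ℕ) :
    ∀ᶠ t in atTop, ∀ m < n, ¬ IsLeast {t' | P m t'} t :=
  (eventually_all_finite (Set.finite_Iio n)).2 fun m _ => by
    have hfin : {t | IsLeast {t' | P m t'} t}.Finite :=
      Set.Subsingleton.finite fun t ht t' ht' => ht.unique ht'
    exact Nat.cofinite_eq_atTop ▸ hfin.eventually_cofinite_notMem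

theorem AdequateVia.anti (h : AdequateVia s r u c σ a m t) (hm : m' ≤ m) :
    AdequateVia s r u c σ a m' t := by
  obtain ⟨hua, hsafe, hhit⟩ := h
  refine ⟨hua, fun u' hu' => ?_, fun v hv τ hτ => (hhit v hv τ hτ).imp_right ?_⟩
  · obtain ⟨z, hz, hmz, h⟩ := hsafe u' hu'
    exact ⟨z, hz, hm.trans hmz, h⟩
  · rintro ⟨z, hz, hmz, h⟩
    exact ⟨z, hz, hm.trans hmz, h⟩

theorem AdequateVia.lt (h : AdequateVia s r u c σ a m t) : m < t := by
  obtain ⟨z, hz, hmz, -⟩ := h.2.1 0 (Nat.zero_le _)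
  exact hmz.trans_lt hz

theorem IsAdequate.frequently_freshlyAdequate (h : IsAdequate s r u c σ) :
    ∃ᶠ t in atTop, FreshlyAdequate s r u c σ t := by
  classical
  refine frequently_atTop.2 fun m => ?_
  obtain ⟨a, -, ha⟩ := Nat.find_spec (h m)
  have hlt := ha.lt
  exact ⟨Nat.find (h m), hlt.le, m, hlt, Nat.isLeast_find (h m)⟩

theorem eventually_not_freshlyAdequate (h : ¬ IsAdequate s r u c σ) :
    ∀ᶠ t in atTop, ¬ FreshlyAdequate s r u c σ t := by
  simp only [IsAdequate, not_forall, not_exists] at h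
  obtain ⟨n, hn⟩ := h
  filter_upwards [eventually_forall_not_isLeast (Adequate s r u c σ) n] with t ht
  rintro ⟨m, -, hleast⟩
  obtain ⟨a, hac, ha⟩ := hleast.1
  exact ht m (not_le.1 fun hm => hn t ⟨a, hac, ha.anti hm⟩) hleast

theorem eventually_not_challenged (hσ : ∀ c' < c, ¬ IsAdequate s r u c' (σ % 2 ^ c'))
    (hτ : ∀ c' < c, ¬ IsAdequate (!s) r v c' (τ % 2 ^ c')) :
    ∀ᶠ t in atTop, ¬ Challenged s r c u σ v τ t := by
  have h : ∀ᶠ t in atTop, ∀ c' < c, ¬ FreshlyAdequate s r u c' (σ % 2 ^ c') t ∧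
      ¬ FreshlyAdequate (!s) r v c' (τ % 2 ^ c') t :=
    (eventually_all_finite (Set.finite_Iio c)).2 fun c' hc' =>
      (eventually_not_freshlyAdequate (hσ c' hc')).and (eventually_not_freshlyAdequate (hτ c' hc'))
  filter_upwards [h] with t ht
  rintro ⟨c', hc', h⟩
  exact h.elim (ht c' hc').1 (ht c' hc').2

theorem challenged_not_iff : Challenged (!s) r c v τ u σ t ↔ Challenged s r c u σ v τ t := by
  simp only [Challenged, Bool.not_not, or_comm]

theorem allExtHit_not_iff : AllExtHit (!s) r z v c τ u c σ ↔ AllExtHit s r z u c σ v c τ :=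
  ⟨fun h => s.not_not ▸ h.swap, AllExtHit.swap⟩

theorem ChosenAt.anti (h : ChosenAt s r c u σ v τ z S') (hS : S ≤ S') :
    ChosenAt s r c u σ v τ z S :=
  ⟨h.1, fun t ht => h.2.1 t (ht.trans_le hS), h.2.2⟩

/-- The strings `σ` and `τ` of length `c` choose the response `z` in the limit. -/
def Chosen (s : Bool) (r c u σ v τ z : ℕ) : Prop := ∀ S, ChosenAt s r c u σ v τ z S

theorem Chosen.not_challenged (h : Chosen s r c u σ v τ z) (ht : z ≤ t) :
    ¬ Challenged s r c u σ v τ t :=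
  (h (t + 1)).2.1 t t.lt_succ_self ht

theorem Chosen.swap (h : Chosen s r c u σ v τ z) : Chosen (!s) r c v τ u σ z := by
  simpa only [Chosen, ChosenAt, challenged_not_iff, allExtHit_not_iff] using h

theorem Chosen.le_of_chosen {z' : ℕ} (h : Chosen s r c u σ v τ z) (h' : Chosen s r c u σ v τ z') :
    z ≤ z' := by
  by_contra! hlt
  obtain ⟨t, -, ht, hc⟩ := (h 0).2.2 z' hlt (h' 0).1
  exact h'.not_challenged ht hc

theorem eventually_not_chosen (s : Bool) (r c u σ v τ : ℕ) :
    ∀ᶠ z in atTop, ¬ Chosen s r c u σ v τ z := by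
  have hfin : {z | Chosen s r c u σ v τ z}.Finite :=
    Set.Subsingleton.finite fun z hz z' hz' => (hz.le_of_chosen hz').antisymm (hz'.le_of_chosen hz)
  exact Nat.cofinite_eq_atTop ▸ hfin.eventually_cofinite_notMem

theorem exists_chosen (h : ∃ᶠ z in atTop, AllExtHit s r z u c σ v c τ)
    (h' : ∀ᶠ t in atTop, ¬ Challenged s r c u σ v τ t) : ∃ z, Chosen s r c u σ v τ z := by
  classical
  have hex : ∃ z, AllExtHit s r z u c σ v c τ ∧ ∀ t, z ≤ t → ¬ Challenged s r c u σ v τ t := by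
    obtain ⟨m, hm⟩ := eventually_atTop.1 h'
    obtain ⟨z, hz, h⟩ := frequently_atTop.1 h m
    exact ⟨z, h, fun t ht => hm t (hz.trans ht)⟩
  obtain ⟨hhit, hcalm⟩ := Nat.find_spec hex
  refine ⟨Nat.find hex, fun S => ⟨hhit, fun t _ => hcalm t, fun z' hz' hhit' => ?_⟩⟩
  have hmin := Nat.find_min hex hz'
  push Not at hmin
  obtain ⟨t, ht, hc⟩ := hmin hhit'
  exact ⟨t, not_le.1 fun hle => hcalm t hle hc, ht, hc⟩

theorem eventually_exists_isResponse_of_active (r : ℕ) :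
    ∀ᶠ k in atTop, Active r k → ∃ ρ, IsResponse r (Nat.pair k ρ) := by
  classical
  by_cases h : ∀ k, r.unpair.2 ≤ k → ∃ t, RespondsBy r k t
  · refine .of_forall fun k hk => ⟨Nat.find (h k hk.2.1), ?_⟩
    rw [IsResponse, Nat.unpair_pair]
    exact ⟨hk, Nat.isLeast_find _⟩
  · simp only [not_forall, not_exists] at h
    obtain ⟨k₀, hk₀, h⟩ := h
    filter_upwards [eventually_forall_not_isLeast (RespondsBelowBy r) (k₀ + 1)] with k hk
    rintro ⟨-, -, m, -, hleast⟩
    exact absurd hleast (hk m (Nat.lt_succ_of_le (not_lt.1 fun hlt => h k (hleast.1 k₀ hlt hk₀))))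

-- Lengths beyond an adequate one are challenged forever, and the finitely many others choose only
-- finitely many responses.
theorem eventually_forall_not_chosen (hX : ¬ Delta2 X) (hr : ∃ᶠ z in atTop, IsResponse r z)
    (s : Bool) (u : ℕ) : ∀ᶠ z in atTop, ∀ c, ∀ v ≤ c, ∀ τ < 2 ^ c,
      ¬ Chosen s r c u (initSeg X c) v τ z := by
  obtain ⟨c₀, hc₀⟩ := exists_isAdequate s hX hr u
  have hsmall : ∀ᶠ z in atTop, ∀ c ≤ c₀, ∀ v ≤ c, ∀ τ < 2 ^ c,
      ¬ Chosen s r c u (initSeg X c) v τ z :=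
    (eventually_all_finite (Set.finite_Iic c₀)).2 fun c _ =>
      (eventually_all_finite (Set.finite_Iic c)).2 fun v _ =>
        (eventually_all_finite (Set.finite_Iio (2 ^ c))).2 fun τ _ =>
          eventually_not_chosen s r c u _ v τ
  filter_upwards [hsmall] with z hz c v hv τ hτ hchosen
  rcases le_or_gt c c₀ with hc | hc
  · exact hz c hc v hv τ hτ hchosen
  · obtain ⟨t, ht, hfresh⟩ := frequently_atTop.1 hc₀.frequently_freshlyAdequate z
    exact hchosen.not_challenged ht ⟨c₀, hc, .inl (by rwa [initSeg_mod X hc.le])⟩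

theorem exists_releasedBy_of_forall_not_chosen {ρ : ℕ} (hρ : IsResponse r (Nat.pair k ρ))
    (h : ∀ c, ∀ v ≤ c, ∀ τ < 2 ^ c, ¬ Chosen s r c u (initSeg X c) v τ (Nat.pair k ρ)) :
    ∃ S, ReleasedBy s r k u (initSeg X (depth k)) S := by
  have hev : ∀ᶠ S in atTop, ∀ c ≤ depth k, ∀ v ≤ c, ∀ τ < 2 ^ c,
      ¬ ChosenAt s r c u (initSeg X c) v τ (Nat.pair k ρ) S :=
    (eventually_all_finite (Set.finite_Iic (depth k))).2 fun c _ =>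
      (eventually_all_finite (Set.finite_Iic c)).2 fun v hv =>
        (eventually_all_finite (Set.finite_Iio (2 ^ c))).2 fun τ hτ => by
          obtain ⟨S, hS⟩ := not_forall.1 (h c v hv τ hτ)
          filter_upwards [eventually_ge_atTop S] with S' hS' hchosen using hS (hchosen.anti hS')
  obtain ⟨S, hS, hρS⟩ := (hev.and (eventually_gt_atTop ρ)).exists
  refine ⟨S, ρ, hρS, hρ, fun c hc _ v hv τ hτ => ?_⟩
  rw [initSeg_mod X hc]
  exact hS c hc v hv τ hτ

theorem eventually_exists_releasedBy (hX : ¬ Delta2 X) (s : Bool) (r u : ℕ) :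
    ∀ᶠ k in atTop, Active r k → ∃ S, ReleasedBy s r k u (initSeg X (depth k)) S := by
  have hchosen : ∀ᶠ z in atTop, IsResponse r z → ∀ c, ∀ v ≤ c, ∀ τ < 2 ^ c,
      ¬ Chosen s r c u (initSeg X c) v τ z := by
    by_cases hr : ∃ᶠ z in atTop, IsResponse r z
    · exact (eventually_forall_not_chosen hX hr s u).mono fun z hz _ => hz
    · exact (not_frequently.1 hr).mono fun z hz h => absurd h hz
  obtain ⟨m, hm⟩ := eventually_atTop.1 hchosen
  filter_upwards [eventually_exists_isResponse_of_active r, eventually_ge_atTop m]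
    with k hk hmk hact
  obtain ⟨ρ, hρ⟩ := hk hact
  exact exists_releasedBy_of_forall_not_chosen hρ (hm _ (hmk.trans (Nat.left_le_pair k ρ)) hρ)

end Chosen

/-! ### Density along dyadic blocks -/

section DyadicDensity

variable {D D' : Set ℕ}

open Classical in
theorem partialDensity_eq_one_sub (D : Set ℕ) {n : ℕ} (hn : n ≠ 0) :
    partialDensity D n = 1 - (Nat.count (· ∉ D) n : ℝ) / n := by
  have hcard : (D ∩ Set.Iio n).ncard = #{x ∈ range n | x ∈ D} := by
    rw [← Set.ncard_coe_finset]
    congr 1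
    ext x
    simp [and_comm]
  have hadd : #{x ∈ range n | x ∈ D} + #{x ∈ range n | x ∉ D} = n :=
    (card_filter_add_card_filter_not _).trans (card_range n)
  have hadd' : (#{x ∈ range n | x ∈ D} + #{x ∈ range n | x ∉ D} : ℝ) = n := mod_cast hadd
  have hn' : (n : ℝ) ≠ 0 := mod_cast hn
  rw [partialDensity, hcard, Nat.count_eq_card_filter_range, eq_sub_iff_add_eq, ← add_div, hadd',
    div_self hn']

open Classical in
theorem density1_iff_isLittleO :
    Density1 D ↔ (fun n => (Nat.count (· ∉ D) n : ℝ)) =o[atTop] fun n : ℕ => (n : ℝ) := by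
  have hsub : (fun n : ℕ => (Nat.count (· ∉ D) n : ℝ) / n) =ᶠ[atTop]
      fun n => 1 - partialDensity D n := by
    filter_upwards [eventually_ne_atTop 0] with n hn
    rw [partialDensity_eq_one_sub D hn, sub_sub_cancel]
  rw [Asymptotics.isLittleO_iff_tendsto (fun n hn => by simp [Nat.cast_eq_zero.1 hn]),
    tendsto_congr' hsub, Density1, HasDensity]
  refine ⟨fun h => by simpa using h.const_sub 1, fun h => by simpa using h.const_sub 1⟩

theorem _root_.Density1.mono (h : Density1 D) (hD : D ⊆ D') : Density1 D' := by
  classical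
  refine density1_iff_isLittleO.2 ((Asymptotics.IsBigO.of_norm_le fun n => ?_).trans_isLittleO
    (density1_iff_isLittleO.1 h))
  rw [RCLike.norm_natCast, Nat.cast_le]
  exact Nat.count_mono_left fun x _ => mt (@hD x)

theorem _root_.Density1.inter (h : Density1 D) (h' : Density1 D') : Density1 (D ∩ D') := by
  classical
  refine density1_iff_isLittleO.2 ((Asymptotics.IsBigO.of_norm_le fun n => ?_).trans_isLittleO
    ((density1_iff_isLittleO.1 h).add (density1_iff_isLittleO.1 h')))
  rw [RCLike.norm_natCast]
  norm_cast
  simp only [Nat.count_eq_card_filter_range, Set.mem_inter_iff, not_and_or, filter_or]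
  exact card_union_le _ _

open Classical in
/-- The number of elements of the block `[2 ^ k, 2 ^ (k + 1))` outside `D`. -/
noncomputable def blockGap (D : Set ℕ) (k : ℕ) : ℕ := Nat.count (fun x => 2 ^ k + x ∉ D) (2 ^ k)

open Classical in
theorem count_notMem_two_pow_succ (D : Set ℕ) (k : ℕ) :
    Nat.count (· ∉ D) (2 ^ (k + 1)) = Nat.count (· ∉ D) (2 ^ k) + blockGap D k := by
  rw [pow_succ, mul_two, Nat.count_add, blockGap]

open Classical in
theorem isLittleO_count_notMem_two_pow
    (h : (fun k => (blockGap D k : ℝ)) =o[atTop] fun k => (2 : ℝ) ^ k) :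
    (fun k => (Nat.count (· ∉ D) (2 ^ k) : ℝ)) =o[atTop] fun k => (2 : ℝ) ^ k := by
  have hpow : Tendsto (fun k => (2 : ℝ) ^ k) atTop atTop :=
    tendsto_pow_atTop_atTop_of_one_lt one_lt_two
  have hgeom : (fun k => ∑ i ∈ range k, (2 : ℝ) ^ i) = fun k => 2 ^ k - 1 := by
    ext k
    rw [geom_sum_eq (by norm_num)]
    norm_num
  have hsum := h.sum_range (fun k => by positivity) (hgeom ▸ tendsto_atTop_add_const_right _ _ hpow)
  have hcount : (fun k => (Nat.count (· ∉ D) (2 ^ k) : ℝ)) =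
      fun k => ∑ i ∈ range k, (blockGap D i : ℝ) + Nat.count (· ∉ D) 1 := by
    ext k
    induction k with
    | zero => simp
    | succ k ih =>
      rw [count_notMem_two_pow_succ, Nat.cast_add, ih, sum_range_succ]
      ring
  rw [hcount]
  refine (hsum.trans_isBigO (.of_norm_le fun k => ?_)).add (Asymptotics.isLittleO_const_left.2
    (.inr (tendsto_norm_atTop_atTop.comp hpow)))
  rw [congrFun hgeom k, Real.norm_of_nonneg (sub_nonneg.2 (one_le_pow₀ one_le_two))]
  exact sub_le_self _ zero_le_one

theorem density1_iff_isLittleO_blockGap :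
    Density1 D ↔ (fun k => (blockGap D k : ℝ)) =o[atTop] fun k => (2 : ℝ) ^ k := by
  classical
  rw [density1_iff_isLittleO]
  refine ⟨fun h => ?_, fun h => ?_⟩
  · have hpow : Tendsto (fun k => 2 ^ (k + 1)) atTop atTop :=
      (tendsto_pow_atTop_atTop_of_one_lt (one_lt_two (α := ℕ))).comp (tendsto_add_atTop_nat 1)
    refine (Asymptotics.IsBigO.of_norm_le fun k => ?_).trans_isLittleO
      ((h.comp_tendsto hpow).trans_isBigO (.of_bound 2 (.of_forall fun k => ?_)))
    · rw [RCLike.norm_natCast, Function.comp_apply, count_notMem_two_pow_succ, Nat.cast_le]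
      exact Nat.le_add_left _ _
    · simp [pow_succ, mul_comm]
  · have hlog : Tendsto (fun n => Nat.log 2 n + 1) atTop atTop :=
      (tendsto_atTop.2 fun b => (eventually_ge_atTop (2 ^ b)).mono fun n hn =>
        (Nat.le_log_of_pow_le one_lt_two hn).trans (Nat.le_succ _))
    refine (Asymptotics.IsBigO.of_norm_le fun n => ?_).trans_isLittleO
      (((isLittleO_count_notMem_two_pow h).comp_tendsto hlog).trans_isBigO
        (.of_bound 2 ((eventually_ne_atTop 0).mono fun n hn => ?_)))
    · rw [RCLike.norm_natCast, Function.comp_apply, Nat.cast_le]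
      exact Nat.count_monotone _ (Nat.lt_pow_succ_log_self one_lt_two n).le
    · have hle : 2 ^ Nat.log 2 n * 2 ≤ 2 * n := by
        rw [mul_comm]
        exact Nat.mul_le_mul_left 2 (Nat.pow_log_le_self 2 hn)
      rw [Function.comp_apply, norm_pow, Real.norm_ofNat, RCLike.norm_natCast, pow_succ]
      exact_mod_cast hle

theorem density1_iff_eventually_mul_blockGap_le :
    Density1 D ↔ ∀ N : ℕ, ∀ᶠ k in atTop, N * blockGap D k ≤ 2 ^ k := by
  rw [density1_iff_isLittleO_blockGap, Asymptotics.isLittleO_iff_nat_mul_le]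
  simp only [RCLike.norm_natCast, norm_pow, Real.norm_ofNat]
  norm_cast

end DyadicDensity

/-! ### The enumerated sets -/

section EnumeratedSet

variable {s : Bool} {r u k x σ S S' : ℕ} {X : Set ℕ}

/-- The set enumerated by the functional of side `s` from the oracle `X`, that is `φ^A` or `ψ^B`.
The element `y` is number `y - 2 ^ Nat.log 2 y` of block `Nat.log 2 y`. -/
def enumeratedSet (s : Bool) (X : Set ℕ) : Set ℕ :=
  {y | ∃ S, FunctionalEnumeratesBy s (Nat.log 2 y) (initSeg X (depth (Nat.log 2 y)))
    (y - 2 ^ Nat.log 2 y) S}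

theorem two_pow_add_mem_enumeratedSet (hx : x < 2 ^ k) :
    2 ^ k + x ∈ enumeratedSet s X ↔
      ∃ S, FunctionalEnumeratesBy s k (initSeg X (depth k)) x S := by
  have hlog : Nat.log 2 (2 ^ k + x) = k :=
    Nat.log_eq_of_pow_le_of_lt_pow (Nat.le_add_right _ _) (by rw [pow_succ]; omega)
  rw [enumeratedSet, Set.mem_ofPred_eq, hlog, Nat.add_sub_cancel_left]

theorem exists_recIn_mem_iff_enumeratedSet (s : Bool) (X : Set ℕ) :
    ∃ φ : ℕ →. ℕ, RecIn (chi X) φ ∧ ∀ y v, v ∈ φ y ↔ v = 1 ∧ y ∈ enumeratedSet s X :=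
  have hlog : Primrec fun a : ℕ × ℕ × ℕ => Nat.log 2 a.1 := primrec_log one_lt_two .fst
  exists_recIn_mem_iff X (primrec_depth (primrec_log one_lt_two primrec_fun_id))
    (P := fun y σ S => FunctionalEnumeratesBy s (Nat.log 2 y) σ (y - 2 ^ Nat.log 2 y) S)
    (primrecPred_functionalEnumeratesBy s hlog (Primrec.fst.comp .snd)
      (Primrec.nat_sub.comp .fst (primrec_pow (.const 2) hlog)) (Primrec.snd.comp .snd))

theorem ReleasedBy.mono (h : ReleasedBy s r k u σ S) (hS : S ≤ S') : ReleasedBy s r k u σ S' := by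
  obtain ⟨ρ, hρ, hr, hn⟩ := h
  exact ⟨ρ, hρ.trans_le hS, hr, fun c hc hu v hv τ hτ h => hn c hc hu v hv τ hτ (h.anti hS)⟩

theorem two_pow_add_mem_enumeratedSet_of_not_omits {N : ℕ} (hx : x < 2 ^ k)
    (hrel : ∀ r < N, ∀ u < N, Active r k → ∃ S, ReleasedBy s r k u (initSeg X (depth k)) S)
    (ho : ¬ Omits s k N (initSeg X (depth k)) x) : 2 ^ k + x ∈ enumeratedSet s X := by
  have hev : ∀ᶠ S in atTop, ∀ r < N, ∀ u < N,
      Active r k → ReleasedBy s r k u (initSeg X (depth k)) S :=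
    (eventually_all_finite (Set.finite_Iio N)).2 fun r hr =>
      (eventually_all_finite (Set.finite_Iio N)).2 fun u hu => eventually_imp_distrib_left.2
        fun ha => by
          obtain ⟨S, hS⟩ := hrel r hr u hu ha
          filter_upwards [eventually_ge_atTop S] with S' hS' using hS.mono hS'
  obtain ⟨S, hS⟩ := hev.exists
  refine (two_pow_add_mem_enumeratedSet hx).2 ⟨S, fun u _ hou r hru ha => ?_⟩
  have hu : u < N := not_le.1 fun hN => ho fun i hi => hou i (hi.trans hN)
  exact hS r (hru.trans_lt hu) u hu ha

theorem density1_enumeratedSet (hX : ¬ Delta2 X) (s : Bool) : Density1 (enumeratedSet s X) := by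
  classical
  refine density1_iff_eventually_mul_blockGap_le.2 fun N => ?_
  have hrel : ∀ᶠ k in atTop, ∀ r < N, ∀ u < N,
      Active r k → ∃ S, ReleasedBy s r k u (initSeg X (depth k)) S :=
    (eventually_all_finite (Set.finite_Iio N)).2 fun r _ =>
      (eventually_all_finite (Set.finite_Iio N)).2 fun u _ => eventually_exists_releasedBy hX s r u
  filter_upwards [hrel, eventually_ge_atTop (4 ^ (N + 1)), eventually_ge_atTop 4] with k hk hN h4
  have hgap : blockGap (enumeratedSet s X) k ≤
      #(zeroDigits k (ownedDigits s k N (initSeg X (depth k)))) := by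
    rw [blockGap, Nat.count_eq_card_filter_range]
    refine card_le_card fun x hx => ?_
    obtain ⟨hx, hxs⟩ := mem_filter.1 hx
    refine mem_zeroDigits_ownedDigits.2 ⟨mem_range.1 hx, not_not.1 fun ho => hxs ?_⟩
    exact two_pow_add_mem_enumeratedSet_of_not_omits (mem_range.1 hx) hk ho
  calc N * blockGap (enumeratedSet s X) k ≤ 2 ^ (N + 1) * _ :=
        Nat.mul_le_mul (N.le_succ.trans Nat.lt_two_pow_self.le) hgap
    _ = 2 ^ k :=
        two_pow_mul_card_zeroDigits_ownedDigits h4 (initSeg_lt X _) (le_depth_of_four_pow_le hN)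

theorem genericallyComputes_of_enumeratedSet_subset {C : Set ℕ} (hX : ¬ Delta2 X)
    (hC : enumeratedSet s X ⊆ C) : GenericallyComputes X C := by
  obtain ⟨φ, hφ, hmem⟩ := exists_recIn_mem_iff_enumeratedSet s X
  refine ⟨φ, hφ, (density1_enumeratedSet hX s).mono fun y hy => Part.dom_iff_mem.2
    ⟨1, (hmem y 1).2 ⟨rfl, hy⟩⟩, fun n v h => .inr ((hmem n v).1 h).1,
    fun n h => hC ((hmem n 1).1 h).2, fun n h => absurd ((hmem n 0).1 h).1 zero_ne_one⟩

end EnumeratedSet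

/-! ### Opponents -/

section Opponent

variable {r k t t' y : ℕ} {W : Set ℕ}

theorem EnumeratesBy.mono (h : EnumeratesBy r t y) (ht : t ≤ t') : EnumeratesBy r t' y :=
  Nat.Partrec.Code.evaln_mono ht h

theorem RespondsBy.mono (h : RespondsBy r k t) (ht : t ≤ t') : RespondsBy r k t' := by
  classical
  refine h.trans (Nat.mul_le_mul_left 2 (card_le_card fun x hx => ?_))
  exact mem_filter.2 ⟨(mem_filter.1 hx).1, EnumeratesBy.mono (mem_filter.1 hx).2 ht⟩

theorem RespondsBy.lt (h : RespondsBy r k t) : k < t := by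
  classical
  have hcard : 0 < #{x ∈ range (2 ^ k) | EnumeratesBy r t (2 ^ k + x)} := by
    have hpos : 0 < 2 ^ k := by positivity
    exact Nat.pos_of_mul_pos_left (hpos.trans_le h)
  obtain ⟨x, hx⟩ := card_pos.1 hcard
  exact (Nat.lt_two_pow_self.trans_le (Nat.le_add_right _ x)).trans
    (Nat.Partrec.Code.evaln_bound (mem_filter.1 hx).2)

theorem exists_respondsBy (hW : ∀ y ∈ W, ∃ t, EnumeratesBy r t y)
    (hgap : 2 * blockGap W k ≤ 2 ^ k) : ∃ t, RespondsBy r k t := by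
  classical
  have hev : ∀ᶠ t in atTop, ∀ x < 2 ^ k, 2 ^ k + x ∈ W → EnumeratesBy r t (2 ^ k + x) :=
    (eventually_all_finite (Set.finite_Iio (2 ^ k))).2 fun x _ => eventually_imp_distrib_left.2
      fun hx => by
        obtain ⟨t, ht⟩ := hW _ hx
        filter_upwards [eventually_ge_atTop t] with t' ht' using ht.mono ht'
  obtain ⟨t, ht⟩ := hev.exists
  refine ⟨t, ?_⟩
  have hadd : #{x ∈ range (2 ^ k) | 2 ^ k + x ∈ W} + blockGap W k = 2 ^ k := by
    rw [blockGap, Nat.count_eq_card_filter_range]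
    exact (card_filter_add_card_filter_not _).trans (card_range _)
  have hle : #{x ∈ range (2 ^ k) | 2 ^ k + x ∈ W} ≤
      #{x ∈ range (2 ^ k) | EnumeratesBy r t (2 ^ k + x)} :=
    card_le_card fun x hx => mem_filter.2
      ⟨(mem_filter.1 hx).1, ht x (mem_range.1 (mem_filter.1 hx).1) (mem_filter.1 hx).2⟩
  rw [RespondsBy]
  omega

theorem frequently_active (h : ∀ k, r.unpair.2 ≤ k → ∃ t, RespondsBy r k t) :
    ∃ᶠ k in atTop, Active r k := by
  classical
  refine frequently_atTop.2 fun n => ?_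
  set m := n + r.unpair.2 + 4
  have hev : ∀ᶠ t in atTop, ∀ k < m, r.unpair.2 ≤ k → RespondsBy r k t :=
    (eventually_all_finite (Set.finite_Iio m)).2 fun k _ => eventually_imp_distrib_left.2
      fun hk => by
        obtain ⟨t, ht⟩ := h k hk
        filter_upwards [eventually_ge_atTop t] with t' ht' using ht.mono ht'
  have hex : ∃ t, RespondsBelowBy r m t := hev.exists
  have hm : m ≤ Nat.find hex :=
    Nat.le_of_pred_lt (Nat.find_spec hex (m - 1) (by omega) (by omega)).lt
  exact ⟨Nat.find hex, by omega, by omega, by omega, m, hm, Nat.isLeast_find hex⟩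

theorem frequently_isResponse (h : ∀ k, r.unpair.2 ≤ k → ∃ t, RespondsBy r k t) :
    ∃ᶠ z in atTop, IsResponse r z := by
  classical
  refine frequently_atTop.2 fun n => ?_
  obtain ⟨k, hk, hact⟩ := frequently_atTop.1 (frequently_active h) n
  have hex := h k hact.2.1
  refine ⟨Nat.pair k (Nat.find hex), hk.trans (Nat.left_le_pair k _), ?_⟩
  rw [IsResponse, Nat.unpair_pair]
  exact ⟨hact, Nat.isLeast_find hex⟩

theorem exists_opponent {e : Nat.Partrec.Code} (hW : ∀ y ∈ W, 1 ∈ e.eval y) (hd : Density1 W) :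
    ∃ r, (∀ t y, EnumeratesBy r t y → 1 ∈ e.eval y) ∧ ∃ᶠ z in atTop, IsResponse r z := by
  obtain ⟨n, hn⟩ := eventually_atTop.1 (density1_iff_eventually_mul_blockGap_le.1 hd 2)
  have henum : ∀ t y, EnumeratesBy (Nat.pair (Encodable.encode e) n) t y ↔ 1 ∈ e.evaln t y := by
    simp [EnumeratesBy]
  refine ⟨_, fun t y h => Nat.Partrec.Code.evaln_sound ((henum t y).1 h),
    frequently_isResponse fun k hk => exists_respondsBy (fun y hy => ?_) (hn k ?_)⟩
  · obtain ⟨t, ht⟩ := Nat.Partrec.Code.evaln_complete.1 (hW y hy)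
    exact ⟨t, (henum t y).2 ht⟩
  · simpa using hk

end Opponent

/-! ### Diagonalization -/

section Diagonalization

variable {s : Bool} {r u v c z x a b σ τ : ℕ} {X Y : Set ℕ}

theorem exists_interleaving (n : ℕ) {f g : ℕ → ℕ} (hf : Monotone f) (hg : Monotone g)
    (hf' : ∀ m, m ≤ f m) (hg' : ∀ m, m ≤ g m) :
    ∃ u ≥ n, ∃ v ≥ n, g v ≤ f (u + 1) ∧ f u ≤ g (v + 1) := by
  classical
  wlog h : f n ≤ g n generalizing f g
  · obtain ⟨u, hu, v, hv, h, h'⟩ := this hg hf hg' hf' (le_of_not_ge h)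
    exact ⟨v, hv, u, hu, h', h⟩
  have hex : ∃ i, g n ≤ f (n + i + 1) := ⟨g n, (by omega : g n ≤ n + g n + 1).trans (hf' _)⟩
  refine ⟨n + Nat.find hex, Nat.le_add_right _ _, n, le_rfl, Nat.find_spec hex, ?_⟩
  refine le_trans ?_ (hg n.le_succ)
  rcases hi : Nat.find hex with _ | i
  · exact h
  · exact (not_le.1 (Nat.find_min hex (hi ▸ i.lt_succ_self))).le

theorem exists_monotone_isLeast_risky (s : Bool) (hX : ¬ Delta2 X)
    (hr : ∃ᶠ z in atTop, IsResponse r z) :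
    ∃ f : ℕ → ℕ, Monotone f ∧ ∀ u, IsLeast {a | Risky s r X u a} (f u) := by
  classical
  have h := exists_risky s hX hr
  refine ⟨fun u => Nat.find (h u), monotone_nat_of_le_succ fun u => ?_,
    fun u => Nat.isLeast_find (h u)⟩
  have hspec := Nat.find_spec (h (u + 1))
  exact Nat.find_min' (h u)
    ⟨u.le_succ.trans hspec.1, fun u' hu' => hspec.2 u' (hu'.trans u.le_succ)⟩

theorem Risky.frequently_noSafeExt (h : Risky s r X u a) (hab : a ≤ b) :
    ∃ᶠ z in atTop, NoSafeExt s r z u b (initSeg X b) :=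
  ((h.2 u le_rfl).and_eventually (eventually_le_responseDepth r b)).mono fun _ ⟨hz, hb⟩ =>
    hz.mono hab (hb hz.1)

theorem IsAdequate.exists_adequateVia (h : IsAdequate s r u c σ) :
    ∃ a ≤ c, ∀ m, ∃ t, AdequateVia s r u c σ a m t := by
  by_contra! hcon
  have hev : ∀ᶠ m in atTop, ∀ a ≤ c, ∀ t, ¬ AdequateVia s r u c σ a m t :=
    (eventually_all_finite (Set.finite_Iic c)).2 fun a ha => by
      obtain ⟨m, hm⟩ := hcon a ha
      filter_upwards [eventually_ge_atTop m] with m' hm' t ht using hm t (ht.anti hm')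
  obtain ⟨m, hm⟩ := hev.exists
  obtain ⟨t, a, hac, ht⟩ := h m
  exact hm a hac t ht

theorem risky_of_adequateVia (hac : a ≤ c)
    (h : ∀ m, ∃ t, AdequateVia s r u c (initSeg X c) a m t) : Risky s r X (u + 1) a := by
  refine ⟨(h 0).choose_spec.1, fun u' hu' => frequently_atTop.2 fun m => ?_⟩
  obtain ⟨t, -, hsafe, -⟩ := h m
  obtain ⟨z, -, hmz, hz⟩ := hsafe u' hu'
  exact ⟨z, hmz, initSeg_mod X hac ▸ hz⟩

theorem frequently_allExtHit_of_adequateVia (h : ∀ m, ∃ t, AdequateVia s r u c σ a m t)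
    (hv : v ≤ a) (hτ : τ < 2 ^ a) (hsafe : ∃ᶠ z in atTop, NoSafeExt (!s) r z v a τ) :
    ∃ᶠ z in atTop, AllExtHit s r z u c σ v a τ := by
  refine frequently_atTop.2 fun m => ?_
  obtain ⟨z₀, hz₀, hsafe⟩ := frequently_atTop.1 hsafe (c + 1)
  obtain ⟨t, ht⟩ := h (max m z₀)
  rcases ht.2.2 v hv τ hτ with hbound | ⟨z, -, hmz, hhit⟩
  · exact absurd (hbound z₀ ((le_max_right m z₀).trans_lt ht.lt) hsafe) (Nat.not_le.2 hz₀)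
  · exact ⟨z, (le_max_left m z₀).trans hmz, hhit⟩

theorem exists_chosen_of_isAdequate (hc : IsAdequate s r u c (initSeg X c))
    (hX : ∀ c' < c, ¬ IsAdequate s r u c' (initSeg X c'))
    (hY : ∀ c' < c, ¬ IsAdequate (!s) r v c' (initSeg Y c')) (hb : Risky (!s) r Y v b)
    (hXY : ∀ a, Risky s r X (u + 1) a → b ≤ a) :
    u ≤ c ∧ v ≤ c ∧ ∃ z, Chosen s r c u (initSeg X c) v (initSeg Y c) z := by
  obtain ⟨a, hac, ha⟩ := hc.exists_adequateVia
  have hua := risky_of_adequateVia hac ha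
  have hba := hXY a hua
  have hva := hb.1.trans hba
  refine ⟨(u.le_succ.trans hua.1).trans hac, hva.trans hac, exists_chosen ?_ ?_⟩
  · exact (frequently_allExtHit_of_adequateVia ha hva (initSeg_lt Y a)
      (hb.frequently_noSafeExt hba)).mono fun z hz => hz.mono_right hac
  · refine eventually_not_challenged (fun c' hc' => ?_) fun c' hc' => ?_
    · exact (initSeg_mod X hc'.le).symm ▸ hX c' hc'
    · exact (initSeg_mod Y hc'.le).symm ▸ hY c' hc'

theorem Chosen.notMem_enumeratedSet (h : Chosen s r c u (initSeg X c) v τ z) (hτ : τ < 2 ^ c)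
    (hru : r ≤ u) (hu : u ≤ c) (hv : v ≤ c) (hx : x < 2 ^ z.unpair.1)
    (ho : Omits s z.unpair.1 u (initSeg X (responseDepth z)) x) :
    2 ^ z.unpair.1 + x ∉ enumeratedSet s X := by
  obtain ⟨hz, hc, -⟩ := (h 0).1
  rw [two_pow_add_mem_enumeratedSet hx]
  rintro ⟨S, hS⟩
  obtain ⟨ρ, -, hρ, hn⟩ := hS u (hu.trans hc) ho r hru hz.1
  have hzρ : Nat.pair z.unpair.1 ρ = z := hρ.ext hz (by rw [Nat.unpair_pair])
  have hnot := hn c hc hu v hv τ hτ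
  rw [hzρ, ← responseDepth, initSeg_mod X hc] at hnot
  exact hnot (h S)

theorem Chosen.exists_taken_notMem_enumeratedSet
    (h : Chosen s r c u (initSeg X c) v (initSeg Y c) z) (hru : r ≤ u) (hrv : r ≤ v) (hu : u ≤ c)
    (hv : v ≤ c) : ∃ x, Taken r z x ∧ 2 ^ z.unpair.1 + x ∉ enumeratedSet s X ∧
      2 ^ z.unpair.1 + x ∉ enumeratedSet (!s) Y := by
  obtain ⟨-, hc, hhit⟩ := (h 0).1
  obtain ⟨x, hx, htaken, hoX, hoY⟩ := hhit (initSeg X (responseDepth z)) (initSeg_lt X _)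
    (initSeg_mod X hc) (initSeg Y (responseDepth z)) (initSeg_lt Y _) (initSeg_mod Y hc)
  exact ⟨x, htaken, h.notMem_enumeratedSet (initSeg_lt Y c) hru hu hv hx hoX,
    h.swap.notMem_enumeratedSet (initSeg_lt X c) hrv hv hu hx hoY⟩

theorem exists_taken_notMem_enumeratedSet (hX : ¬ Delta2 X) (hY : ¬ Delta2 Y)
    (hr : ∃ᶠ z in atTop, IsResponse r z) : ∃ z x, Taken r z x ∧
      2 ^ z.unpair.1 + x ∉ enumeratedSet false X ∧ 2 ^ z.unpair.1 + x ∉ enumeratedSet true Y := by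
  classical
  obtain ⟨f, hf, hfr⟩ := exists_monotone_isLeast_risky false hX hr
  obtain ⟨g, hg, hgr⟩ := exists_monotone_isLeast_risky true hY hr
  obtain ⟨u, hu, v, hv, hgf, hfg⟩ :=
    exists_interleaving r hf hg (fun u => (hfr u).1.1) fun v => (hgr v).1.1
  have hcX := exists_isAdequate false hX hr u
  have hcY := exists_isAdequate true hY hr v
  rcases le_total (Nat.find hcX) (Nat.find hcY) with h | h
  · obtain ⟨huc, hvc, z, hz⟩ := exists_chosen_of_isAdequate (Nat.find_spec hcX)
      (fun c' hc' => Nat.find_min hcX hc') (fun c' hc' => Nat.find_min hcY (hc'.trans_le h))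
      (hgr v).1 fun a ha => hgf.trans ((hfr _).2 ha)
    exact ⟨z, hz.exists_taken_notMem_enumeratedSet hu hv huc hvc⟩
  · obtain ⟨hvc, huc, z, hz⟩ := exists_chosen_of_isAdequate (Nat.find_spec hcY)
      (fun c' hc' => Nat.find_min hcY hc') (fun c' hc' => Nat.find_min hcX (hc'.trans_le h))
      (hfr u).1 fun a ha => hfg.trans ((hgr _).2 ha)
    obtain ⟨x, hx, hxY, hxX⟩ := hz.exists_taken_notMem_enumeratedSet hv hu hvc huc
    exact ⟨z, x, hx, hxX, hxY⟩

theorem not_genericallyComputable_union (hX : ¬ Delta2 X) (hY : ¬ Delta2 Y) :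
    ¬ GenericallyComputable (enumeratedSet false X ∪ enumeratedSet true Y) := by
  rintro ⟨φ, hφ, hdom, hval, hone, hzero⟩
  obtain ⟨e, rfl⟩ := Nat.Partrec.Code.exists_code.1 hφ
  have hC := (density1_enumeratedSet hX false).mono
    (Set.subset_union_left (t := enumeratedSet true Y))
  have heval : ∀ y ∈ {n | (e.eval n).Dom} ∩ (enumeratedSet false X ∪ enumeratedSet true Y),
      1 ∈ e.eval y := by
    rintro n ⟨hn, hnC⟩
    obtain ⟨v, hv⟩ := Part.dom_iff_mem.1 hn
    rcases hval n v hv with rfl | rfl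
    · exact absurd hnC (hzero n hv)
    · exact hv
  obtain ⟨r, hsound, hr⟩ := exists_opponent heval (hdom.inter hC)
  obtain ⟨z, x, htaken, hxX, hxY⟩ := exists_taken_notMem_enumeratedSet hX hY hr
  exact (hone _ (hsound _ _ htaken)).elim hxX hxY

end Diagonalization

end MinimalPair

/-- If neither `A` nor `B` is `Δ⁰₂`, then `A` and `B` do not form a minimal pair for
generic computability: some `C` is not generically computable but is generically
computable from each of `A` and `B`. -/
theorem no_minimal_pair_of_not_delta2 (A B : Set ℕ)
    (hA : ¬ Delta2 A) (hB : ¬ Delta2 B) :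
    ∃ C : Set ℕ, ¬ GenericallyComputable C ∧
      GenericallyComputes A C ∧ GenericallyComputes B C :=
  ⟨MinimalPair.enumeratedSet false A ∪ MinimalPair.enumeratedSet true B,
    MinimalPair.not_genericallyComputable_union hA hB,
    MinimalPair.genericallyComputes_of_enumeratedSet_subset hA Set.subset_union_left,
    MinimalPair.genericallyComputes_of_enumeratedSet_subset hB Set.subset_union_right⟩
end
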